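/- arXiv:1805.09118 — 7 statements merged into one kernel-verified Lean document; each statement's English description precedes it below -/
import Mathlib

section
/- Let m ≥ 2 and let a, b, c be divisors of m such that for every prime p, writing s, t, u for the p-adic valuations of a, b, c respectively: if s ≠ t then u = min(s,t), and if s = t then s ≤ u. Let e = (a*b*c/gcd(a,b)) * f, where f is a positive integer such that for every prime p, the p-adic valuation v of f satisfies v ≤ ν_p(m) − max(s,t,u), and moreover v = 0 whenever p = 2 and either a*b*c is odd or 2 divides gcd(a,b,c). Then there exists a subgroup G of Z with |G| = e, |A(G)| = a, |B(G)| = b and |C(G)| = c; in particular, G has exactly a+b+c−3 homologies. -/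
/-- `Z = ZMod m × ZMod m`. -/
abbrev Zgrp (m : ℕ) : Type := ZMod m × ZMod m

/-- `A(G) = {g ∈ G : g.2 = 0}`. -/
def Asub (m : ℕ) (G : AddSubgroup (Zgrp m)) : AddSubgroup (Zgrp m) :=
  G ⊓ (AddMonoidHom.snd (ZMod m) (ZMod m)).ker

/-- `B(G) = {g ∈ G : g.1 = 0}`. -/
def Bsub (m : ℕ) (G : AddSubgroup (Zgrp m)) : AddSubgroup (Zgrp m) :=
  G ⊓ (AddMonoidHom.fst (ZMod m) (ZMod m)).ker

/-- `C(G) = {g ∈ G : g.1 = g.2}`. -/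
def Csub (m : ℕ) (G : AddSubgroup (Zgrp m)) : AddSubgroup (Zgrp m) :=
  G ⊓ (AddMonoidHom.fst (ZMod m) (ZMod m) - AddMonoidHom.snd (ZMod m) (ZMod m)).ker


/-- multiplication by `k` from `ZMod N` to `ZMod (N*k)`. -/
def iot (m N k : ℕ) (h : m = N * k) : ZMod N →+ ZMod m :=
  ZMod.lift N ⟨(AddMonoidHom.mulRight (k : ZMod m)).comp (Int.castAddHom (ZMod m)), by
    subst h
    simp only [AddMonoidHom.coe_comp, Function.comp, Int.coe_castAddHom, AddMonoidHom.mulRight_apply]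
    have := ZMod.natCast_self (N * k)
    push_cast at this ⊢
    exact this⟩

lemma iot_int (m N k : ℕ) (h : m = N * k) (i : ℤ) :
    iot m N k h (i : ZMod N) = ((i * k : ℤ) : ZMod m) := by
  simp [iot, ZMod.lift_coe]

lemma iot_inj (m N k : ℕ) (h : m = N * k) (hk : 0 < k) : Function.Injective (iot m N k h) := by
  rw [injective_iff_map_eq_zero]
  intro z hz
  obtain ⟨i, rfl⟩ := ZMod.intCast_surjective z
  rw [iot_int, ZMod.intCast_zmod_eq_zero_iff_dvd] at hz
  rw [ZMod.intCast_zmod_eq_zero_iff_dvd]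
  subst h
  push_cast at hz
  exact Int.dvd_of_mul_dvd_mul_right (by positivity) hz

lemma card_of_param {m N : ℕ} (S : AddSubgroup (Zgrp m)) (φ : ZMod N →+ Zgrp m)
    (hφ : Function.Injective φ) (h : ∀ g, g ∈ S ↔ ∃ i : ℤ, φ i = g) : Nat.card S = N := by
  have : S = φ.range := by
    ext g
    rw [h, AddMonoidHom.mem_range]
    constructor
    · rintro ⟨i, hi⟩; exact ⟨i, hi⟩
    · rintro ⟨z, hz⟩
      obtain ⟨i, rfl⟩ := ZMod.intCast_surjective z
      exact ⟨i, hz⟩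
  subst this
  rw [← Nat.card_congr (AddMonoidHom.ofInjective hφ).toEquiv, Nat.card_zmod]

lemma core (d a b c f h : ℕ) (hd : 0 < d) (ha : 0 < a) (hb : 0 < b) (hc : 0 < c) (hf : 0 < f)
    (hh : 0 < h) (hab : Nat.Coprime a b) (y : ℤ) (hy : IsCoprime ((c * f : ℕ) : ℤ) y)
    (hg1 : (c : ℤ) ∣ b - y * a)
    (hg : ∀ l : ℤ, ((c * f : ℕ) : ℤ) ∣ l * (b - y * a) → (f : ℤ) ∣ l)
    (m : ℕ) (hm : m = d * a * b * c * f * h) :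
    ∃ G : AddSubgroup (Zgrp m),
      Nat.card ↥G = (d * a) * (d * b) * (c * f) ∧
      Nat.card ↥(Asub m G) = d * a ∧
      Nat.card ↥(Bsub m G) = d * b ∧
      Nat.card ↥(Csub m G) = d * c := by
  have h1 : m = (d * a * (c * f)) * (b * h) := by rw [hm]; ring
  have h2 : m = (d * b * (c * f)) * (a * h) := by rw [hm]; ring
  have hA : m = (d * a) * (b * c * f * h) := by rw [hm]; ring
  have hB : m = (d * b) * (a * c * f * h) := by rw [hm]; ring
  have hC : m = (d * c) * (a * b * f * h) := by rw [hm]; ring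
  have hmZ : (m : ℤ) = d * a * b * c * f * h := by rw [hm]; push_cast; ring
  let r1 : ZMod (d * a * (c * f)) →+ ZMod (c * f) :=
    (ZMod.castHom (Dvd.intro_left _ rfl) (ZMod (c * f))).toAddMonoidHom
  let r2 : ZMod (d * b * (c * f)) →+ ZMod (c * f) :=
    (ZMod.castHom (Dvd.intro_left _ rfl) (ZMod (c * f))).toAddMonoidHom
  have hr1 : ∀ i : ℤ, r1 i = i := fun i => by simp [r1]
  have hr2 : ∀ i : ℤ, r2 i = i := fun i => by simp [r2]
  let ψ : ZMod (d * a * (c * f)) × ZMod (d * b * (c * f)) →+ ZMod (c * f) :=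
    r2.comp (AddMonoidHom.snd _ _) -
      ((AddMonoidHom.mulLeft (y : ZMod (c * f))).comp r1).comp (AddMonoidHom.fst _ _)
  have hψ : ∀ i j : ℤ, ψ (i, j) = ((j - y * i : ℤ) : ZMod (c * f)) := by
    intro i j
    simp only [ψ, AddMonoidHom.sub_apply, AddMonoidHom.comp_apply, AddMonoidHom.coe_snd,
      AddMonoidHom.coe_fst, AddMonoidHom.coe_mulLeft, hr1, hr2]
    push_cast; rfl
  let Φ : ZMod (d * a * (c * f)) × ZMod (d * b * (c * f)) →+ Zgrp m :=
    (iot m _ _ h1).prodMap (iot m _ _ h2)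
  have hΦ : Function.Injective Φ :=
    Function.Injective.prodMap (iot_inj _ _ _ h1 (by positivity)) (iot_inj _ _ _ h2 (by positivity))
  have hmem : ∀ X Y : ZMod m, (X, Y) ∈ ψ.ker.map Φ ↔ ∃ i j : ℤ,
      ((c * f : ℕ) : ℤ) ∣ j - y * i ∧ X = ((i * (b * h) : ℤ) : ZMod m) ∧
        Y = ((j * (a * h) : ℤ) : ZMod m) := by
    intro X Y
    rw [AddSubgroup.mem_map]
    constructor
    · rintro ⟨⟨z1, z2⟩, hz, hz'⟩
      obtain ⟨i, rfl⟩ := ZMod.intCast_surjective z1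
      obtain ⟨j, rfl⟩ := ZMod.intCast_surjective z2
      rw [AddMonoidHom.mem_ker, hψ, ZMod.intCast_zmod_eq_zero_iff_dvd] at hz
      refine ⟨i, j, hz, ?_⟩
      have hz'' : (iot m _ _ h1 i, iot m _ _ h2 j) = (X, Y) := hz'
      rw [iot_int, iot_int, Prod.mk.injEq] at hz''
      rw [← hz''.1, ← hz''.2]
      push_cast; exact ⟨rfl, rfl⟩
    · rintro ⟨i, j, hij, rfl, rfl⟩
      refine ⟨(i, j), ?_, ?_⟩
      · rwa [AddMonoidHom.mem_ker, hψ, ZMod.intCast_zmod_eq_zero_iff_dvd]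
      · change (iot m _ _ h1 i, iot m _ _ h2 j) = _
        rw [iot_int, iot_int]
        push_cast; rfl
  have hw : (((c * f : ℕ) : ℤ)) ≠ 0 := by positivity
  have habZ : IsCoprime (a : ℤ) b := Nat.isCoprime_iff_coprime.2 hab
  refine ⟨ψ.ker.map Φ, ?_, ?_, ?_, ?_⟩
  · rw [Nat.card_congr (ψ.ker.equivMapOfInjective Φ hΦ).symm.toEquiv]
    have hs : Function.Surjective ψ := by
      intro z
      obtain ⟨i, rfl⟩ := ZMod.intCast_surjective z
      refine ⟨((0 : ℤ), (i : ℤ)), ?_⟩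
      rw [hψ]; simp
    have e1 := ψ.ker.card_mul_index
    rw [AddSubgroup.index_ker, AddMonoidHom.range_eq_top.2 hs, AddSubgroup.card_top,
      Nat.card_prod, Nat.card_zmod, Nat.card_zmod, Nat.card_zmod] at e1
    have hcf : 0 < c * f := by positivity
    apply Nat.eq_of_mul_eq_mul_right hcf
    rw [e1]; ring
  · refine card_of_param _ ((AddMonoidHom.inl _ _).comp (iot m _ _ hA)) ?_ ?_
    · intro x y hxy
      exact iot_inj _ _ _ hA (by positivity) (congrArg Prod.fst hxy)
    · rintro ⟨X, Y⟩
      simp only [Asub, AddSubgroup.mem_inf, hmem, AddMonoidHom.mem_ker, AddMonoidHom.coe_snd,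
        AddMonoidHom.comp_apply, AddMonoidHom.inl_apply, iot_int, Prod.mk.injEq]
      constructor
      · rintro ⟨⟨i, j, hij, rfl, rfl⟩, h0⟩
        rw [ZMod.intCast_zmod_eq_zero_iff_dvd] at h0
        have hj : ((c * f : ℕ) : ℤ) ∣ j := by
          obtain ⟨q, hq⟩ := h0
          refine ⟨d * b * q, ?_⟩
          have : ((a : ℤ) * h) ≠ 0 := by positivity
          apply mul_right_cancel₀ this
          rw [hq, hmZ]; push_cast; ring
        have hi : ((c * f : ℕ) : ℤ) ∣ i := by
          have := dvd_sub hj hij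
          rw [sub_sub_cancel] at this
          exact hy.dvd_of_dvd_mul_left this
        obtain ⟨q, rfl⟩ := hi
        refine ⟨q, ?_, ?_⟩
        · congr 1; push_cast; ring
        · exact ((ZMod.intCast_zmod_eq_zero_iff_dvd _ _).2 h0).symm
      · rintro ⟨q, rfl, rfl⟩
        refine ⟨⟨(c * f : ℕ) * q, 0, ?_, ?_, ?_⟩, rfl⟩
        · exact ⟨- (y * q), by ring⟩
        · congr 1; push_cast; ring
        · simp
  · refine card_of_param _ ((AddMonoidHom.inr _ _).comp (iot m _ _ hB)) ?_ ?_
    · intro x y hxy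
      exact iot_inj _ _ _ hB (by positivity) (congrArg Prod.snd hxy)
    · rintro ⟨X, Y⟩
      simp only [Bsub, AddSubgroup.mem_inf, hmem, AddMonoidHom.mem_ker, AddMonoidHom.coe_fst,
        AddMonoidHom.comp_apply, AddMonoidHom.inr_apply, iot_int, Prod.mk.injEq]
      constructor
      · rintro ⟨⟨i, j, hij, rfl, rfl⟩, h0⟩
        rw [ZMod.intCast_zmod_eq_zero_iff_dvd] at h0
        have hi : ((c * f : ℕ) : ℤ) ∣ i := by
          obtain ⟨q, hq⟩ := h0
          refine ⟨d * a * q, ?_⟩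
          have : ((b : ℤ) * h) ≠ 0 := by positivity
          apply mul_right_cancel₀ this
          rw [hq, hmZ]; push_cast; ring
        have hj : ((c * f : ℕ) : ℤ) ∣ j := by
          have := dvd_add hij (hi.mul_left y)
          rwa [sub_add_cancel] at this
        obtain ⟨q, rfl⟩ := hj
        refine ⟨q, ?_, ?_⟩
        · exact ((ZMod.intCast_zmod_eq_zero_iff_dvd _ _).2 h0).symm
        · congr 1; push_cast; ring
      · rintro ⟨q, rfl, rfl⟩
        refine ⟨⟨0, (c * f : ℕ) * q, ?_, ?_, ?_⟩, rfl⟩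
        · exact ⟨q, by ring⟩
        · simp
        · congr 1; push_cast; ring
  · refine card_of_param _ ((iot m _ _ hC).prod (iot m _ _ hC)) ?_ ?_
    · intro x y hxy
      exact iot_inj _ _ _ hC (by positivity) (congrArg Prod.fst hxy)
    · rintro ⟨X, Y⟩
      simp only [Csub, AddSubgroup.mem_inf, hmem, AddMonoidHom.mem_ker, AddMonoidHom.coe_fst,
        AddMonoidHom.coe_snd, AddMonoidHom.sub_apply, sub_eq_zero,
        AddMonoidHom.prod_apply, iot_int, Prod.mk.injEq]
      constructor
      · rintro ⟨⟨i, j, hij, rfl, rfl⟩, h0⟩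
        have h0' := h0
        rw [← sub_eq_zero, ← Int.cast_sub, ZMod.intCast_zmod_eq_zero_iff_dvd] at h0
        obtain ⟨q, hq⟩ := h0
        have hhZ : (h : ℤ) ≠ 0 := by positivity
        have hq' : i * b - j * a = d * a * b * c * f * q := by
          apply mul_right_cancel₀ hhZ
          rw [hmZ] at hq
          linear_combination hq
        have hia : (a : ℤ) ∣ i := by
          refine IsCoprime.dvd_of_dvd_mul_right habZ ⟨j + d * b * c * f * q, ?_⟩
          linear_combination hq'
        obtain ⟨l, rfl⟩ := hia
        have haZ : (a : ℤ) ≠ 0 := by positivity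
        have hj : j = b * l - d * b * c * f * q := by
          apply mul_right_cancel₀ haZ
          linear_combination -hq'
        have hl : (f : ℤ) ∣ l := by
          apply hg
          obtain ⟨s, hs⟩ := hij
          refine ⟨s + d * b * q, ?_⟩
          rw [hj] at hs
          push_cast at hs ⊢
          linear_combination hs
        obtain ⟨l', rfl⟩ := hl
        refine ⟨l', ?_, ?_⟩
        · congr 1; push_cast; ring
        · rw [← h0']; congr 1; push_cast; ring
      · rintro ⟨q, rfl, rfl⟩
        refine ⟨⟨a * f * q, b * f * q, ?_, ?_, ?_⟩, rfl⟩
        · obtain ⟨s, hs⟩ := hg1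
          exact ⟨s * q, by push_cast; linear_combination (f : ℤ) * q * hs⟩
        · congr 1; push_cast; ring
        · congr 1; push_cast; ring

lemma homol (m : ℕ) (hm : 2 ≤ m) (G : AddSubgroup (Zgrp m)) :
    (((Asub m G : Set (Zgrp m)) ∪ (Bsub m G : Set (Zgrp m)) ∪ (Csub m G : Set (Zgrp m)))
        \ {0}).ncard = Nat.card (Asub m G) + Nat.card (Bsub m G) + Nat.card (Csub m G) - 3 := by
  have : NeZero m := ⟨by omega⟩
  have key : ∀ S : AddSubgroup (Zgrp m), ((S : Set (Zgrp m)) \ {0}).ncard + 1 = Nat.card S := by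
    intro S
    rw [Set.ncard_sdiff_singleton_add_one (by simp) (Set.toFinite _)]
    rfl
  rw [Set.union_sdiff_distrib, Set.union_sdiff_distrib, Set.ncard_union_eq, Set.ncard_union_eq]
  · have := key (Asub m G)
    have := key (Bsub m G)
    have := key (Csub m G)
    omega
  · rw [Set.disjoint_left]
    rintro ⟨x, y⟩
    simp only [Asub, Bsub, AddSubgroup.coe_inf, Set.mem_sdiff, Set.mem_inter_iff,
      SetLike.mem_coe, AddMonoidHom.mem_ker, AddMonoidHom.coe_fst, AddMonoidHom.coe_snd,
      Set.mem_singleton_iff, Prod.mk_eq_zero]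
    tauto
  · rw [Set.disjoint_left]
    rintro ⟨x, y⟩
    simp only [Asub, Bsub, Csub, AddSubgroup.coe_inf, Set.mem_sdiff, Set.mem_inter_iff,
      Set.mem_union, AddMonoidHom.sub_apply, sub_eq_zero,
      SetLike.mem_coe, AddMonoidHom.mem_ker, AddMonoidHom.coe_fst, AddMonoidHom.coe_snd,
      Set.mem_singleton_iff, Prod.mk_eq_zero]
    rintro (⟨⟨_, h1⟩, h2⟩ | ⟨⟨_, h1⟩, h2⟩) ⟨⟨_, h3⟩, _⟩
    · exact h2 ⟨h3.trans h1, h1⟩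
    · exact h2 ⟨h1, h3.symm.trans h1⟩

lemma dvd_eq_aux {x y z : ℤ} (h : x ∣ y) (e : y = z) : x ∣ z := e ▸ h

lemma local_y (a b c f p : ℕ) (hp : p.Prime) (hc0 : c ≠ 0) (hab : Nat.Coprime a b)
    (hc : Nat.Coprime c (a * b)) (hpcf : p ∣ c * f) (h2 : 2 ∣ f → 2 ∣ c ∨ 2 ∣ a * b) :
    ∃ z : ℤ, ∀ y : ℤ, y ≡ z [ZMOD (p : ℤ) ^ (c.factorization p + 1)] →
      ¬ (p : ℤ) ∣ y ∧ (p : ℤ) ^ c.factorization p ∣ b - y * a ∧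
        ¬ (p : ℤ) ^ (c.factorization p + 1) ∣ b - y * a := by
  have hpZ : Prime (p : ℤ) := Nat.prime_iff_prime_int.1 hp
  set u := c.factorization p with hu
  by_cases h1 : p ∣ a * b
  · have hpc : ¬ p ∣ c := fun h => hp.one_lt.ne' (Nat.eq_one_of_dvd_coprimes hc h h1)
    have hu0 : u = 0 := Nat.factorization_eq_zero_of_not_dvd hpc
    rw [hu0]
    refine ⟨1, fun y hy => ?_⟩
    have hy' := hy.symm.dvd
    rw [zero_add, pow_one] at hy' ⊢
    refine ⟨fun h => ?_, by simp, fun h => ?_⟩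
    · have := dvd_sub h hy'
      rw [sub_sub_cancel] at this
      exact hpZ.not_dvd_one this
    · have h3 : (p : ℤ) ∣ b - a := by
        have := dvd_add h (hy'.mul_right (a : ℤ))
        refine (dvd_eq_aux this ?_)
        ring
      have h4 : p ∣ a ∧ p ∣ b := by
        rcases hp.dvd_mul.1 h1 with h5 | h5
        · refine ⟨h5, ?_⟩
          have := dvd_add h3 (Int.natCast_dvd_natCast.2 h5)
          rw [sub_add_cancel] at this
          exact_mod_cast this
        · refine ⟨?_, h5⟩
          have := dvd_sub (Int.natCast_dvd_natCast.2 h5) h3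
          rw [sub_sub_cancel] at this
          exact_mod_cast this
      exact hp.one_lt.ne' (Nat.eq_one_of_dvd_coprimes hab h4.1 h4.2)
  · have hpa : ¬ p ∣ a := fun h => h1 (h.mul_right b)
    have hpb : ¬ (p : ℤ) ∣ b := fun h => h1 ((Int.natCast_dvd_natCast.1 h).mul_left a)
    have hco : IsCoprime (a : ℤ) ((p : ℤ) ^ (u + 1)) := by
      apply IsCoprime.pow_right
      exact (Nat.isCoprime_iff_coprime.2 ((Nat.Prime.coprime_iff_not_dvd hp).2 hpa)).symm
    obtain ⟨a1, k, hk⟩ := hco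
    by_cases h3 : p ∣ c
    · have hu1 : u ≠ 0 := (hp.factorization_pos_of_dvd hc0 h3).ne'
      refine ⟨a1 * (b + p ^ u), fun y hy => ?_⟩
      obtain ⟨q, hq⟩ := hy.symm.dvd
      have hya : (b : ℤ) - y * a = - p ^ u + p ^ (u + 1) * (k * (b + p ^ u) - q * a) := by
        linear_combination (-(a : ℤ)) * hq - (b + (p : ℤ) ^ u) * hk
      have hnd : ¬ (p : ℤ) ^ (u + 1) ∣ b - y * a := by
        intro h
        rw [hya, dvd_add_left (Dvd.intro _ rfl), dvd_neg,
          pow_dvd_pow_iff hpZ.ne_zero hpZ.not_isUnit] at h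
        omega
      refine ⟨fun h => ?_, ?_, hnd⟩
      · apply hpb
        have e1 : (p : ℤ) ∣ b - y * a := by
          rw [hya]
          refine dvd_add (dvd_neg.2 (dvd_pow_self _ hu1)) ((dvd_pow_self _ (by omega)).mul_right _)
        have := dvd_add e1 (h.mul_right (a : ℤ))
        rwa [sub_add_cancel] at this
      · rw [hya]
        exact dvd_add (dvd_neg.2 dvd_rfl) ((pow_dvd_pow _ (by omega)).mul_right _)
    · have hu0 : u = 0 := Nat.factorization_eq_zero_of_not_dvd h3
      have hpf : p ∣ f := (hp.dvd_mul.1 hpcf).resolve_left h3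
      have hp2 : p ≠ 2 := by
        rintro rfl
        rcases h2 hpf with h | h
        · exact h3 h
        · exact h1 h
      rw [hu0] at hk ⊢
      rw [zero_add, pow_one] at hk ⊢
      refine ⟨-(a1 * b), fun y hy => ?_⟩
      obtain ⟨q, hq⟩ := hy.symm.dvd
      have hya : y * a = - b + p * (q * a + k * b) := by
        linear_combination (a : ℤ) * hq - (b : ℤ) * hk
      refine ⟨fun h => ?_, by simp, fun h => ?_⟩
      · have := h.mul_right (a : ℤ)
        rw [hya, dvd_add_left (Dvd.intro _ rfl), dvd_neg] at this
        exact hpb this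
      · rw [hya] at h
        have h4 : (p : ℤ) ∣ 2 * b := by
          have := dvd_add h (Dvd.intro (q * a + k * b) rfl : (p : ℤ) ∣ p * (q * a + k * b))
          refine (dvd_eq_aux this ?_)
          ring
        rcases hpZ.dvd_or_dvd h4 with h5 | h5
        · have : p ∣ 2 := by exact_mod_cast h5
          exact hp2 ((Nat.prime_dvd_prime_iff_eq hp Nat.prime_two).1 this)
        · exact hpb h5

lemma exists_y (a b c f : ℕ) (hc0 : c ≠ 0) (hf0 : f ≠ 0) (hab : Nat.Coprime a b)
    (hc : Nat.Coprime c (a * b)) (h2 : 2 ∣ f → 2 ∣ c ∨ 2 ∣ a * b) :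
    ∃ y : ℤ, IsCoprime ((c * f : ℕ) : ℤ) y ∧ (c : ℤ) ∣ b - y * a ∧
      ∀ l : ℤ, ((c * f : ℕ) : ℤ) ∣ l * (b - y * a) → (f : ℤ) ∣ l := by
  have hcf : c * f ≠ 0 := mul_ne_zero hc0 hf0
  have hloc : ∀ p : ℕ, ∃ z : ℕ, p ∈ (c * f).primeFactors →
      ∀ y : ℤ, y ≡ z [ZMOD (p : ℤ) ^ (c.factorization p + 1)] →
      ¬ (p : ℤ) ∣ y ∧ (p : ℤ) ^ c.factorization p ∣ b - y * a ∧
        ¬ (p : ℤ) ^ (c.factorization p + 1) ∣ b - y * a := by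
    intro p
    by_cases hp : p ∈ (c * f).primeFactors
    · have hpp := Nat.prime_of_mem_primeFactors hp
      obtain ⟨z, hz⟩ := local_y a b c f p hpp hc0 hab hc (Nat.dvd_of_mem_primeFactors hp) h2
      have hpos : (0 : ℤ) < (p : ℤ) ^ (c.factorization p + 1) := by
        have := hpp.pos
        positivity
      refine ⟨(z % (p : ℤ) ^ (c.factorization p + 1)).toNat, fun _ y hy => hz y ?_⟩
      rw [Int.toNat_of_nonneg (Int.emod_nonneg _ hpos.ne')] at hy
      exact hy.trans (Int.mod_modEq _ _)
    · exact ⟨0, fun h => absurd h hp⟩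
  choose z hz using hloc
  obtain ⟨y, hy⟩ := Nat.chineseRemainderOfFinset z (fun p => p ^ (c.factorization p + 1))
    (c * f).primeFactors (fun p hp => pow_ne_zero _ (Nat.prime_of_mem_primeFactors hp).ne_zero)
    (fun p hp q hq hpq => Nat.Coprime.pow _ _ ((Nat.coprime_primes
      (Nat.prime_of_mem_primeFactors hp) (Nat.prime_of_mem_primeFactors hq)).2 hpq))
  have key : ∀ p : ℕ, p.Prime → p ∣ c * f →
      ¬ (p : ℤ) ∣ (y : ℤ) ∧ (p : ℤ) ^ c.factorization p ∣ b - (y : ℤ) * a ∧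
        ¬ (p : ℤ) ^ (c.factorization p + 1) ∣ b - (y : ℤ) * a := by
    intro p hp hd
    have hmem : p ∈ (c * f).primeFactors := Nat.mem_primeFactors.2 ⟨hp, hd, hcf⟩
    apply hz p hmem
    have := (Int.natCast_modEq_iff).2 (hy p hmem)
    push_cast at this
    exact this
  have hdvd : (c : ℤ) ∣ b - (y : ℤ) * a := by
    rw [Int.natCast_dvd, Nat.dvd_iff_prime_pow_dvd_dvd]
    intro p k hp hk
    rcases Nat.eq_zero_or_pos k with rfl | hk0
    · simp
    have hpc : p ∣ c := (dvd_pow_self p hk0.ne').trans hk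
    have hk' : k ≤ c.factorization p := (hp.pow_dvd_iff_le_factorization hc0).1 hk
    have := (key p hp (hpc.mul_right f)).2.1
    rw [← Int.natCast_dvd]
    push_cast
    exact (pow_dvd_pow _ hk').trans this
  refine ⟨y, ?_, hdvd, ?_⟩
  · rw [Nat.isCoprime_iff_coprime]
    apply Nat.coprime_of_dvd
    intro p hp h1 h3
    exact (key p hp h1).1 (Int.natCast_dvd_natCast.2 h3)
  · intro l hl
    obtain ⟨r, hr⟩ := hdvd
    have hfr : IsCoprime (f : ℤ) r := by
      rw [Int.isCoprime_iff_gcd_eq_one]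
      change Nat.Coprime f r.natAbs
      apply Nat.coprime_of_dvd
      intro p hp h1 h3
      apply (key p hp (h1.mul_left c)).2.2
      rw [hr, pow_succ]
      refine mul_dvd_mul ?_ (Int.natCast_dvd.2 h3)
      exact_mod_cast Nat.ordProj_dvd c p
    rw [hr] at hl
    have hcZ : (c : ℤ) ≠ 0 := by exact_mod_cast hc0
    have : (f : ℤ) ∣ l * r := by
      apply (mul_dvd_mul_iff_left hcZ).1
      push_cast at hl
      refine (dvd_eq_aux hl ?_)
      ring
    exact hfr.dvd_of_dvd_mul_right this

/-- Theorem 3.1(i) of Dalla Volta–Montanucci–Zini: existence of a subgroup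
`G ≤ ZMod m × ZMod m` with prescribed order `e` and prescribed orders `a`, `b`, `c`
of the subgroups `A(G)`, `B(G)`, `C(G)`; in particular `G` has exactly
`a + b + c - 3` homologies. -/
theorem stmt0 (m : ℕ) (hm : 2 ≤ m) (a b c : ℕ)
    (ha0 : 0 < a) (hb0 : 0 < b) (hc0 : 0 < c)
    (ha : a ∣ m) (hb : b ∣ m) (hc : c ∣ m)
    (habc : ∀ p : ℕ, p.Prime →
      (a.factorization p ≠ b.factorization p →
        c.factorization p = min (a.factorization p) (b.factorization p)) ∧
      (a.factorization p = b.factorization p →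
        a.factorization p ≤ c.factorization p))
    (f : ℕ) (hf0 : 0 < f)
    (hfval : ∀ p : ℕ, p.Prime →
      f.factorization p ≤ m.factorization p -
        max (a.factorization p) (max (b.factorization p) (c.factorization p)))
    (hf2 : (Odd (a * b * c) ∨ 2 ∣ Nat.gcd a (Nat.gcd b c)) → f.factorization 2 = 0)
    (e : ℕ) (he : e = a * b * c / Nat.gcd a b * f) :
    ∃ G : AddSubgroup (Zgrp m),
      Nat.card ↥G = e ∧
      Nat.card ↥(Asub m G) = a ∧
      Nat.card ↥(Bsub m G) = b ∧
      Nat.card ↥(Csub m G) = c ∧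
      (((Asub m G : Set (Zgrp m)) ∪ (Bsub m G : Set (Zgrp m)) ∪ (Csub m G : Set (Zgrp m)))
        \ {0}).ncard = a + b + c - 3 := by
  have hd0 : 0 < Nat.gcd a b := Nat.gcd_pos_of_pos_left _ ha0
  have hdc : Nat.gcd a b ∣ c := by
    rw [← Nat.factorization_le_iff_dvd hd0.ne' hc0.ne', Nat.factorization_gcd ha0.ne' hb0.ne']
    intro p
    rw [Finsupp.inf_apply]
    by_cases hp : p.Prime
    · have := habc p hp
      change min _ _ ≤ _
      omega
    · simp [Nat.factorization_eq_zero_of_not_prime _ hp]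
  have hgf : ∀ p, (Nat.gcd a b).factorization p = min (a.factorization p) (b.factorization p) := by
    intro p
    rw [Nat.factorization_gcd ha0.ne' hb0.ne', Finsupp.inf_apply]
  obtain ⟨a', ha'⟩ := Nat.gcd_dvd_left a b
  obtain ⟨b', hb'⟩ := Nat.gcd_dvd_right a b
  obtain ⟨c', hc'⟩ := hdc
  have hab : Nat.Coprime a' b' := by
    have := Nat.gcd_mul_left (Nat.gcd a b) a' b'
    rw [← ha', ← hb'] at this
    exact Nat.eq_of_mul_eq_mul_left hd0 (by rw [← this, mul_one])
  have hm0 : m ≠ 0 := by omega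
  generalize Nat.gcd a b = d at *
  have ha'0 : a' ≠ 0 := by rintro rfl; simp at ha'; omega
  have hb'0 : b' ≠ 0 := by rintro rfl; simp at hb'; omega
  have hc'0 : c' ≠ 0 := by rintro rfl; simp at hc'; omega
  have fa : ∀ p, a.factorization p = d.factorization p + a'.factorization p := by
    intro p; rw [ha', Nat.factorization_mul hd0.ne' ha'0]; rfl
  have fb : ∀ p, b.factorization p = d.factorization p + b'.factorization p := by
    intro p; rw [hb', Nat.factorization_mul hd0.ne' hb'0]; rfl
  have fc : ∀ p, c.factorization p = d.factorization p + c'.factorization p := by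
    intro p; rw [hc', Nat.factorization_mul hd0.ne' hc'0]; rfl
  have hcab : Nat.Coprime c' (a' * b') := by
    apply Nat.coprime_of_dvd
    intro p hp h1 h2
    have e1 := hp.factorization_pos_of_dvd hc'0 h1
    have e2 := hp.factorization_pos_of_dvd (mul_ne_zero ha'0 hb'0) h2
    rw [Nat.factorization_mul ha'0 hb'0, Finsupp.add_apply] at e2
    have := habc p hp
    have := fa p
    have := fb p
    have := fc p
    have := hgf p
    omega
  have h2 : 2 ∣ f → 2 ∣ c' ∨ 2 ∣ a' * b' := by
    intro h
    by_contra hcon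
    push Not at hcon
    have e1 := Nat.prime_two.factorization_pos_of_dvd hf0.ne' h
    have hna : ¬ 2 ∣ a' := fun h => hcon.2 (h.mul_right _)
    have hnb : ¬ 2 ∣ b' := fun h => hcon.2 (h.mul_left _)
    have : f.factorization 2 = 0 := by
      apply hf2
      by_cases hd2 : 2 ∣ d
      · right
        exact Nat.dvd_gcd (ha' ▸ hd2.mul_right _)
          (Nat.dvd_gcd (hb' ▸ hd2.mul_right _) (hc' ▸ hd2.mul_right _))
      · left
        rw [← Nat.not_even_iff_odd, even_iff_two_dvd, ha', hb', hc']
        simp only [Nat.prime_two.dvd_mul]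
        tauto
    omega
  have hdvd : d * a' * b' * c' * f ∣ m := by
    have n1 := mul_ne_zero hd0.ne' ha'0
    have n2 := mul_ne_zero n1 hb'0
    have n3 := mul_ne_zero n2 hc'0
    rw [← Nat.factorization_le_iff_dvd (mul_ne_zero n3 hf0.ne') hm0]
    intro p
    rw [Nat.factorization_mul n3 hf0.ne', Nat.factorization_mul n2 hc'0,
      Nat.factorization_mul n1 hb'0, Nat.factorization_mul hd0.ne' ha'0]
    simp only [Finsupp.add_apply]
    by_cases hp : p.Prime
    · have := habc p hp
      have := fa p
      have := fb p
      have := fc p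
      have := hgf p
      have := hfval p hp
      have := (Nat.factorization_le_iff_dvd ha0.ne' hm0).2 ha p
      have := (Nat.factorization_le_iff_dvd hb0.ne' hm0).2 hb p
      have := (Nat.factorization_le_iff_dvd hc0.ne' hm0).2 hc p
      omega
    · simp [Nat.factorization_eq_zero_of_not_prime _ hp]
  obtain ⟨h, hh⟩ := hdvd
  have hh0 : 0 < h := by
    rcases Nat.eq_zero_or_pos h with rfl | h0
    · simp at hh; omega
    · exact h0
  obtain ⟨y, hy1, hy2, hy3⟩ := exists_y a' b' c' f hc'0 hf0.ne' hab hcab h2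
  obtain ⟨G, g1, g2, g3, g4⟩ := core d a' b' c' f h hd0 (by omega) (by omega) (by omega) hf0 hh0
    hab y hy1 hy2 hy3 m hh
  refine ⟨G, ?_, by rw [g2, ha'], by rw [g3, hb'], by rw [g4, hc'], ?_⟩
  · rw [g1, he]
    have : a * b * c / d = a * b * c' := by
      rw [hc']
      apply Nat.div_eq_of_eq_mul_left hd0
      ring
    rw [this, ha', hb']; ring
  · rw [homol m hm G, g2, g3, g4, ha', hb', hc']
end

section
/- For every subgroup G of Z, the quotient of G by the subgroup A(G) + B(G) + C(G) generated by the homologies of G is a cyclic group. -/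
/-- From the proof of Theorem 3.1: the quotient of `G` by the subgroup
`A(G) + B(G) + C(G)` generated by the homologies of `G` is cyclic. -/
theorem stmt2 (m : ℕ) (hm : 2 ≤ m) (G : AddSubgroup (Zgrp m)) :
    IsAddCyclic (↥G ⧸ ((Asub m G ⊔ Bsub m G ⊔ Csub m G).addSubgroupOf G)) := by
  obtain ⟨⟨x, hx⟩, hgen⟩ := IsAddCyclic.exists_generator
    (α := (G.map (AddMonoidHom.snd (ZMod m) (ZMod m))))
  obtain ⟨g, hg, rfl⟩ := hx
  refine ⟨⟨QuotientAddGroup.mk ⟨g, hg⟩, ?_⟩⟩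
  intro q
  induction q using QuotientAddGroup.induction_on with
  | H h =>
    obtain ⟨h, hh⟩ := h
    obtain ⟨n, hn⟩ := AddSubgroup.mem_zmultiples_iff.1
      (hgen ⟨h.2, AddSubgroup.mem_map.2 ⟨h, hh, rfl⟩⟩)
    have hn2 : n • g.2 = h.2 := congrArg Subtype.val hn
    refine AddSubgroup.mem_zmultiples_iff.2 ⟨n, ?_⟩
    rw [← QuotientAddGroup.mk_zsmul]
    refine QuotientAddGroup.eq.2 ?_
    rw [AddSubgroup.mem_addSubgroupOf]
    refine AddSubgroup.mem_sup_left (AddSubgroup.mem_sup_left ?_)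
    refine AddSubgroup.mem_inf.2 ⟨SetLike.coe_mem _, ?_⟩
    rw [AddMonoidHom.mem_ker]
    change -(n • g.2) + h.2 = 0
    rw [hn2, neg_add_cancel]
end

section
/- For every subgroup G of Z, with a = |A(G)|, b = |B(G)| and c = |C(G)|: gcd(a,b) divides c, and the subgroup A(G) + B(G) + C(G) of Z has order a*b*c/gcd(a,b). -/
theorem aux_card_sup {G : Type*} [AddCommGroup G] (H K : AddSubgroup G) :
    Nat.card ↥(H ⊔ K) * Nat.card ↥(H ⊓ K) = Nat.card H * Nat.card K := by
  have h1 := AddSubgroup.relIndex_mul_relIndex ⊥ K (H ⊔ K) bot_le le_sup_right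
  have h2 := AddSubgroup.relIndex_mul_relIndex ⊥ (H ⊓ K) H bot_le inf_le_left
  rw [AddSubgroup.relIndex_sup_right] at h1
  rw [AddSubgroup.inf_relIndex_left] at h2
  simp only [AddSubgroup.relIndex_bot_left] at h1 h2
  rw [← h1, ← h2]; ring

theorem aux_mem {m : ℕ} [NeZero m] (H : AddSubgroup (ZMod m)) :
    H = (nsmulAddMonoidHom (α := ZMod m) (Nat.card H)).ker := by
  apply AddSubgroup.eq_of_le_of_card_ge
  · intro x hx
    rw [AddMonoidHom.mem_ker]
    have := card_nsmul_eq_zero' (x := (⟨x, hx⟩ : H))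
    exact congrArg Subtype.val this
  · rw [IsAddCyclic.card_nsmulAddMonoidHom_ker]
    exact Nat.gcd_le_right _ Nat.card_pos

theorem aux_inf {m : ℕ} [NeZero m] (H K : AddSubgroup (ZMod m)) :
    Nat.card ↥(H ⊓ K) = Nat.gcd (Nat.card H) (Nat.card K) := by
  have h : H ⊓ K = (nsmulAddMonoidHom (α := ZMod m) (Nat.gcd (Nat.card H) (Nat.card K))).ker := by
    ext x
    have hx : x ∈ H ⊓ K ↔ (Nat.card H) • x = 0 ∧ (Nat.card K) • x = 0 := by
      rw [AddSubgroup.mem_inf]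
      conv_lhs => rw [aux_mem H, aux_mem K]
      rfl
    rw [hx, AddMonoidHom.mem_ker]
    change _ ↔ (Nat.gcd (Nat.card H) (Nat.card K)) • x = 0
    simp only [← addOrderOf_dvd_iff_nsmul_eq_zero, Nat.dvd_gcd_iff]
  rw [h, IsAddCyclic.card_nsmulAddMonoidHom_ker]
  apply Nat.gcd_eq_right
  exact (Nat.gcd_dvd_left _ _).trans (AddSubgroup.card_addSubgroup_dvd_card H)

/-- From the proof of Theorem 3.1: `gcd(a,b) ∣ c` and the subgroup
`A(G) + B(G) + C(G)` generated by the homologies has order `a*b*c/gcd(a,b)`. -/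
theorem stmt3 (m : ℕ) (hm : 2 ≤ m) (G : AddSubgroup (Zgrp m)) (a b c : ℕ)
    (hA : a = Nat.card ↥(Asub m G)) (hB : b = Nat.card ↥(Bsub m G))
    (hC : c = Nat.card ↥(Csub m G)) :
    Nat.gcd a b ∣ c ∧
    Nat.card ↥(Asub m G ⊔ Bsub m G ⊔ Csub m G) = a * b * c / Nat.gcd a b := by
  have : NeZero m := ⟨by omega⟩
  let d : ZMod m →+ Zgrp m := (AddMonoidHom.id _).prod (AddMonoidHom.id _)
  have hd : Function.Injective d := fun x y h => congrArg Prod.fst h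
  let P := G.comap (AddMonoidHom.inl (ZMod m) (ZMod m))
  let Q := G.comap (AddMonoidHom.inr (ZMod m) (ZMod m))
  have eA : Asub m G = P.map (AddMonoidHom.inl (ZMod m) (ZMod m)) := by
    ext ⟨x, y⟩
    simp only [Asub, P, AddSubgroup.mem_inf, AddMonoidHom.mem_ker, AddSubgroup.mem_map,
      AddSubgroup.mem_comap, AddMonoidHom.inl_apply, AddMonoidHom.coe_snd, Prod.mk.injEq]
    constructor
    · rintro ⟨h, rfl⟩; exact ⟨x, h, rfl, rfl⟩
    · rintro ⟨z, h, rfl, rfl⟩; exact ⟨h, rfl⟩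
  have eB : Bsub m G = Q.map (AddMonoidHom.inr (ZMod m) (ZMod m)) := by
    ext ⟨x, y⟩
    simp only [Bsub, Q, AddSubgroup.mem_inf, AddMonoidHom.mem_ker, AddSubgroup.mem_map,
      AddSubgroup.mem_comap, AddMonoidHom.inr_apply, AddMonoidHom.coe_fst, Prod.mk.injEq]
    constructor
    · rintro ⟨h, rfl⟩; exact ⟨y, h, rfl, rfl⟩
    · rintro ⟨z, h, rfl, rfl⟩; exact ⟨h, rfl⟩
  have cA : a = Nat.card P := by
    rw [hA, eA]
    exact AddSubgroup.card_map_of_injective (fun x y h => congrArg Prod.fst h)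
  have cB : b = Nat.card Q := by
    rw [hB, eB]
    exact AddSubgroup.card_map_of_injective (fun x y h => congrArg Prod.snd h)
  have eI : (Asub m G ⊔ Bsub m G) ⊓ Csub m G = (P ⊓ Q).map d := by
    ext ⟨x, y⟩
    simp only [AddSubgroup.mem_inf, AddSubgroup.mem_map, AddSubgroup.mem_sup]
    constructor
    · rintro ⟨⟨⟨p, p'⟩, ⟨hp, hp'⟩, ⟨q', q⟩, ⟨hq, hq'⟩, h⟩, -, hxy⟩
      change p' = 0 at hp'
      change q' = 0 at hq'
      change x - y = 0 at hxy
      subst hp' hq'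
      obtain rfl := sub_eq_zero.mp hxy
      simp only [Prod.mk_add_mk, add_zero, zero_add, Prod.mk.injEq] at h
      obtain ⟨rfl, rfl⟩ := h
      exact ⟨_, ⟨hp, hq⟩, rfl⟩
    · rintro ⟨z, ⟨hp, hq⟩, h⟩
      change (z, z) = (x, y) at h
      simp only [Prod.mk.injEq] at h
      obtain ⟨rfl, rfl⟩ := h
      refine ⟨⟨(z, 0), ⟨hp, rfl⟩, (0, z), ⟨hq, rfl⟩, by simp⟩, ?_, sub_self z⟩
      have := G.add_mem hp hq
      simpa using this
  have cI : Nat.card ↥((Asub m G ⊔ Bsub m G) ⊓ Csub m G) = Nat.gcd a b := by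
    rw [eI, AddSubgroup.card_map_of_injective hd, aux_inf, cA, cB]
  have eAB : Asub m G ⊓ Bsub m G = ⊥ := by
    rw [eq_bot_iff]
    rintro ⟨x, y⟩ ⟨⟨_, h1⟩, ⟨_, h2⟩⟩
    exact Prod.ext h2 h1
  have h1 := aux_card_sup (Asub m G) (Bsub m G)
  have h2 := aux_card_sup (Asub m G ⊔ Bsub m G) (Csub m G)
  rw [eAB, AddSubgroup.card_bot, mul_one, ← hA, ← hB] at h1
  rw [cI, h1, ← hC] at h2
  constructor
  · rw [← cI, hC]
    exact AddSubgroup.card_dvd_of_le inf_le_right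
  · rw [← h2, Nat.mul_div_cancel]
    rw [← cI]; exact Nat.card_pos
end

section
/- If G and G' are subgroups of Z with |G| = |G'|, |A(G)| = |A(G')|, |B(G)| = |B(G')| and |C(G)| = |C(G')|, then G and G' are isomorphic as groups. -/
theorem aux_retract {G : Type*} [CommGroup G] [Finite G] (g : G)
    (hg : orderOf g = Monoid.exponent G) :
    ∃ r : G →* Subgroup.zpowers g, ∀ z : Subgroup.zpowers g, r z = z := by
  have hne : NeZero (Monoid.exponent G) := ⟨Monoid.exponent_ne_zero_of_finite⟩
  have hR : HasEnoughRootsOfUnity ℂ (Monoid.exponent G) := inferInstance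
  have hcard : Nat.card (Subgroup.zpowers g) = Nat.card (rootsOfUnity (Monoid.exponent G) ℂ) := by
    rw [HasEnoughRootsOfUnity.natCard_rootsOfUnity, Nat.card_zpowers, hg]
  let u : Subgroup.zpowers g ≃* rootsOfUnity (Monoid.exponent G) ℂ := mulEquivOfCyclicCardEq hcard
  obtain ⟨χ, hχ⟩ := MonoidHom.domRestrict_surjective ℂ (Subgroup.zpowers g)
    ((rootsOfUnity (Monoid.exponent G) ℂ).subtype.comp u.toMonoidHom)
  have hmem : ∀ x, χ x ∈ rootsOfUnity (Monoid.exponent G) ℂ := by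
    intro x
    rw [mem_rootsOfUnity, ← map_pow, Monoid.pow_exponent_eq_one, map_one]
  refine ⟨u.symm.toMonoidHom.comp (χ.codRestrict _ hmem), fun z => ?_⟩
  have h := DFunLike.congr_fun hχ z
  change u.symm _ = z
  rw [MulEquiv.symm_apply_eq]
  exact Subtype.ext h

theorem aux_struct {G : Type*} [CommGroup G] [Finite G]
    (h : ∀ n : ℕ, 0 < n → Nat.card {x : G // x ^ n = 1} ≤ n ^ 2) :
    ∃ H K : Subgroup G, IsCyclic H ∧ IsCyclic K ∧ Nat.card H = Monoid.exponent G ∧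
      Nonempty (H × K ≃* G) := by
  classical
  obtain ⟨g, hg⟩ := Monoid.exists_orderOf_eq_exponent (G := G) Monoid.ExponentExists.of_finite
  obtain ⟨r, hr⟩ := aux_retract g hg
  have hinj : ∀ (z z' : Subgroup.zpowers g) (k k' : r.ker), (z : G) * k = z' * k' →
      z = z' ∧ k = k' := by
    intro z z' k k' he
    have h1 := congrArg r he
    rw [map_mul, map_mul, hr, hr, MonoidHom.mem_ker.1 k.2, MonoidHom.mem_ker.1 k'.2,
      mul_one, mul_one] at h1
    refine ⟨h1, ?_⟩
    subst h1
    exact Subtype.ext (mul_left_cancel he)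
  refine ⟨Subgroup.zpowers g, r.ker, inferInstance, ?_, by rw [Nat.card_zpowers, hg], ⟨?_⟩⟩
  · letI : Fintype r.ker := Fintype.ofFinite _
    apply isCyclic_of_card_pow_eq_one_le
    intro n hn
    have he : 0 < orderOf g := orderOf_pos g
    set d := Nat.gcd n (orderOf g) with hd
    have hd0 : 0 < d := Nat.gcd_pos_of_pos_left _ hn
    have hde : d ∣ orderOf g := Nat.gcd_dvd_right _ _
    have hw : orderOf (g ^ (orderOf g / d)) = d := orderOf_pow_orderOf_div he.ne' hde
    have hkd : ∀ k : G, k ^ n = 1 → k ^ d = 1 := by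
      intro k hk
      rw [← orderOf_dvd_iff_pow_eq_one] at hk ⊢
      exact Nat.dvd_gcd hk (hg ▸ Monoid.order_dvd_exponent k)
    set w := g ^ (orderOf g / d) with hwdef
    have hwg : Subgroup.zpowers w ≤ Subgroup.zpowers g := by
      rw [Subgroup.zpowers_le]
      exact Subgroup.npow_mem_zpowers g _
    have hwd : ∀ z ∈ Subgroup.zpowers w, z ^ d = 1 := by
      intro z hz
      rw [← orderOf_dvd_iff_pow_eq_one, ← hw]
      exact orderOf_dvd_of_mem_zpowers hz
    let f : Subgroup.zpowers w × {k : r.ker // k ^ n = 1} → {x : G // x ^ d = 1} :=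
      fun p => ⟨(p.1 : G) * (p.2.1 : G), by
        rw [mul_pow, hwd _ p.1.2, hkd _ (by exact_mod_cast congrArg Subtype.val p.2.2), one_mul]⟩
    have hf : Function.Injective f := by
      rintro ⟨z, k, hk⟩ ⟨z', k', hk'⟩ hh
      have := hinj ⟨z, hwg z.2⟩ ⟨z', hwg z'.2⟩ k k' (congrArg Subtype.val hh)
      obtain ⟨h1, h2⟩ := this
      have h3 : z = z' := Subtype.ext (Subtype.mk.inj h1)
      subst h2 h3
      rfl
    have hle := (Nat.card_le_card_of_injective f hf).trans (h d hd0)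
    rw [Nat.card_prod, Nat.card_zpowers, hw, pow_two] at hle
    have h4 := Nat.le_of_mul_le_mul_left hle hd0
    rw [Nat.card_eq_fintype_card, Fintype.card_subtype] at h4
    exact h4.trans (Nat.gcd_le_left _ hn)
  · refine MulEquiv.ofBijective
      ((Subgroup.zpowers g).subtype.coprod r.ker.subtype) ⟨?_, ?_⟩
    · rintro ⟨z, k⟩ ⟨z', k'⟩ hh
      obtain ⟨h1, h2⟩ := hinj z z' k k' hh
      rw [h1, h2]
    · intro x
      refine ⟨(r x, ⟨(r x : G)⁻¹ * x, ?_⟩), ?_⟩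
      · rw [MonoidHom.mem_ker, map_mul, map_inv, hr, inv_mul_cancel]
      · simp

theorem aux_iso {G G' : Type*} [CommGroup G] [Finite G] [CommGroup G'] [Finite G']
    (h : ∀ n : ℕ, 0 < n → Nat.card {x : G // x ^ n = 1} ≤ n ^ 2)
    (h' : ∀ n : ℕ, 0 < n → Nat.card {x : G' // x ^ n = 1} ≤ n ^ 2)
    (hc : Nat.card G = Nat.card G') (he : Monoid.exponent G = Monoid.exponent G') :
    Nonempty (G ≃* G') := by
  obtain ⟨H, K, hH, hK, hHe, ⟨i⟩⟩ := aux_struct h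
  obtain ⟨H', K', hH', hK', hHe', ⟨i'⟩⟩ := aux_struct h'
  have c1 : Nat.card H = Nat.card H' := by rw [hHe, hHe', he]
  have c2 : Nat.card K = Nat.card K' := by
    have e1 := Nat.card_congr i.toEquiv
    have e2 := Nat.card_congr i'.toEquiv
    rw [Nat.card_prod] at e1 e2
    rw [← hc, ← e1, ← c1] at e2
    exact (Nat.eq_of_mul_eq_mul_left Nat.card_pos e2).symm
  exact ⟨i.symm.trans
    ((MulEquiv.prodCongr (mulEquivOfCyclicCardEq c1) (mulEquivOfCyclicCardEq c2)).trans i')⟩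

theorem aux_tors (m : ℕ) [NeZero m] (G : AddSubgroup (Zgrp m)) (n : ℕ) (hn : 0 < n) :
    Nat.card {x : Multiplicative G // x ^ n = 1} ≤ n ^ 2 := by
  classical
  have hz : Nat.card {a : ZMod m // n • a = 0} ≤ n := by
    rw [Nat.card_eq_fintype_card, Fintype.card_subtype]
    exact IsAddCyclic.card_nsmul_eq_zero_le hn
  have key : ∀ x : Multiplicative G, x ^ n = 1 → n • (x.toAdd : Zgrp m) = 0 := by
    intro x hx
    have := congrArg (fun y : Multiplicative G => (y.toAdd : Zgrp m)) hx
    simpa using this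
  let f : {x : Multiplicative G // x ^ n = 1} →
      {a : ZMod m // n • a = 0} × {a : ZMod m // n • a = 0} :=
    fun x => (⟨(x.1.toAdd : Zgrp m).1, congrArg Prod.fst (key x.1 x.2)⟩,
      ⟨(x.1.toAdd : Zgrp m).2, congrArg Prod.snd (key x.1 x.2)⟩)
  have hf : Function.Injective f := by
    intro x y hxy
    have h1 := congrArg (fun p => (p.1 : ZMod m)) hxy
    have h2 := congrArg (fun p => (p.2 : ZMod m)) hxy
    apply Subtype.ext
    apply Multiplicative.toAdd.injective
    exact Subtype.ext (Prod.ext h1 h2)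
  refine (Nat.card_le_card_of_injective f hf).trans ?_
  rw [Nat.card_prod, pow_two]
  exact Nat.mul_le_mul hz hz

theorem aux_exp (m : ℕ) [NeZero m] (G : AddSubgroup (Zgrp m)) :
    AddMonoid.exponent G = Nat.lcm (Nat.card (G.map (AddMonoidHom.fst (ZMod m) (ZMod m))))
      (Nat.card (G.map (AddMonoidHom.snd (ZMod m) (ZMod m)))) := by
  have up : ∀ f : Zgrp m →+ ZMod m, Nat.card (G.map f) ∣ AddMonoid.exponent G := by
    intro f
    rw [← IsAddCyclic.exponent_eq_card]
    refine AddMonoid.exponent_dvd_of_forall_nsmul_eq_zero ?_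
    rintro ⟨_, x, hx, rfl⟩
    have h0 := AddMonoid.exponent_nsmul_eq_zero (⟨x, hx⟩ : G)
    have h1 : AddMonoid.exponent G • x = 0 := congrArg Subtype.val h0
    apply Subtype.ext
    change AddMonoid.exponent G • f x = 0
    rw [← map_nsmul, h1, map_zero]
  have dn : ∀ (f : Zgrp m →+ ZMod m) (x : Zgrp m), x ∈ G → Nat.card (G.map f) • f x = 0 := by
    intro f x hx
    have : Nat.card (G.map f) • (⟨f x, x, hx, rfl⟩ : G.map f) = 0 := card_nsmul_eq_zero'
    exact congrArg Subtype.val this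
  apply Nat.dvd_antisymm
  · refine AddMonoid.exponent_dvd_of_forall_nsmul_eq_zero ?_
    rintro ⟨x, hx⟩
    apply Subtype.ext
    have l1 := addOrderOf_dvd_of_nsmul_eq_zero (dn (AddMonoidHom.fst _ _) x hx)
    have l2 := addOrderOf_dvd_of_nsmul_eq_zero (dn (AddMonoidHom.snd _ _) x hx)
    refine Prod.ext ?_ ?_
    · exact addOrderOf_dvd_iff_nsmul_eq_zero.1 (l1.trans (Nat.dvd_lcm_left _ _))
    · exact addOrderOf_dvd_iff_nsmul_eq_zero.1 (l2.trans (Nat.dvd_lcm_right _ _))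
  · exact Nat.lcm_dvd (up _) (up _)

theorem aux_card (m : ℕ) [NeZero m] (G : AddSubgroup (Zgrp m)) (f : Zgrp m →+ ZMod m) :
    Nat.card (G.map f) * Nat.card ↥(G ⊓ f.ker) = Nat.card G := by
  have h1 := (f.comp G.subtype).ker.card_mul_index
  rw [AddSubgroup.index_ker, AddMonoidHom.range_comp, AddSubgroup.range_subtype] at h1
  rw [← h1, mul_comm]
  congr 1
  refine Nat.card_congr
    { toFun := fun x => ⟨⟨x.1, x.2.1⟩, x.2.2⟩
      invFun := fun x => ⟨x.1.1, x.1.2, x.2⟩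
      left_inv := fun _ => rfl
      right_inv := fun _ => rfl }

theorem stmt4 (m : ℕ) (hm : 2 ≤ m) (G G' : AddSubgroup (Zgrp m))
    (hG : Nat.card ↥G = Nat.card ↥G')
    (hA : Nat.card ↥(Asub m G) = Nat.card ↥(Asub m G'))
    (hB : Nat.card ↥(Bsub m G) = Nat.card ↥(Bsub m G'))
    (hC : Nat.card ↥(Csub m G) = Nat.card ↥(Csub m G')) :
    Nonempty (↥G ≃+ ↥G') := by
  haveI : NeZero m := ⟨by omega⟩
  have key : ∀ f : Zgrp m →+ ZMod m, Nat.card ↥(G ⊓ f.ker) = Nat.card ↥(G' ⊓ f.ker) →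
      Nat.card (G.map f) = Nat.card (G'.map f) := by
    intro f hf
    have e1 := aux_card m G f
    have e2 := aux_card m G' f
    rw [← hG, ← e1, ← hf] at e2
    exact (Nat.eq_of_mul_eq_mul_right Nat.card_pos e2).symm
  have he : AddMonoid.exponent G = AddMonoid.exponent G' := by
    rw [aux_exp, aux_exp, key _ hA, key _ hB]
  obtain ⟨i⟩ := aux_iso (G := Multiplicative G) (G' := Multiplicative G')
    (aux_tors m G) (aux_tors m G') hG
    (by rw [Monoid.exponent_multiplicative, Monoid.exponent_multiplicative, he])
  exact ⟨AddEquiv.toMultiplicative.symm i⟩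
end

section
/- Let m ≥ 3 be odd and let a, c, e be positive integers with e | m², c | m, a | c, a*c | e, (e/a) | m and gcd(e/(a*c), c/a) = 1. Then there exists a subgroup G of M with |G| = 2e such that: N(G) has order e; π(G) is generated by the transposition swapping the indices 1 and 2 and fixing 3; |N(G) ∩ H₁| = |N(G) ∩ H₂| = a and |N(G) ∩ H₃| = c; and the number of elements of order 2 in G ∖ N(G) equals e/c. -/
/-- `V = (ZMod m)³`, written multiplicatively. -/
abbrev Vgrp (m : ℕ) : Type := Fin 3 → Multiplicative (ZMod m)

/-- The diagonal embedding `ZMod m → (ZMod m)³`. -/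
def diagHom (m : ℕ) : Multiplicative (ZMod m) →* Vgrp m :=
  MonoidHom.mk' (fun t _ => t) (fun _ _ => rfl)

/-- The diagonal subgroup `Δ = {(t,t,t)}` of `(ZMod m)³`. -/
def Δgrp (m : ℕ) : Subgroup (Vgrp m) := (diagHom m).range

/-- `W = (ZMod m)³ ⧸ Δ`. -/
abbrev Wgrp (m : ℕ) : Type := Vgrp m ⧸ Δgrp m

/-- The action of `S₃ = Equiv.Perm (Fin 3)` on `(ZMod m)³` permuting the coordinates. -/
def permV (m : ℕ) : Equiv.Perm (Fin 3) →* MulAut (Vgrp m) :=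
  MonoidHom.mk'
    (fun σ => MulEquiv.arrowCongr σ (MulEquiv.refl (Multiplicative (ZMod m))))
    (fun σ τ => by ext v i; rfl)

lemma permV_map_diag (m : ℕ) (σ : Equiv.Perm (Fin 3)) :
    (Δgrp m).map (permV m σ) = Δgrp m := by
  ext v
  constructor
  · rintro ⟨_, ⟨t, rfl⟩, rfl⟩
    exact ⟨t, rfl⟩
  · rintro ⟨t, rfl⟩
    exact ⟨diagHom m t, ⟨t, rfl⟩, rfl⟩

/-- The action of `S₃` on `W`, permuting the three coordinates (well defined since
`Δ` is invariant). -/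
def permW (m : ℕ) : Equiv.Perm (Fin 3) →* MulAut (Wgrp m) :=
  MonoidHom.mk'
    (fun σ => QuotientGroup.congr (Δgrp m) (Δgrp m) (permV m σ) (permV_map_diag m σ))
    (fun σ τ => by
      ext x
      refine QuotientGroup.induction_on x (fun v => ?_)
      rfl)

/-- `M = W ⋊ S₃`. -/
abbrev Mgrp (m : ℕ) : Type := Wgrp m ⋊[permW m] Equiv.Perm (Fin 3)

/-- `N(G) = G ∩ W`, where `W` is identified with the kernel of the projection
`π = rightHom : M → S₃` (i.e. with `W × {1} ≤ M`). -/
def NG {m : ℕ} (G : Subgroup (Mgrp m)) : Subgroup (Mgrp m) :=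
  G ⊓ (SemidirectProduct.rightHom : Mgrp m →* Equiv.Perm (Fin 3)).ker

/-- The subgroup of `V = (ZMod m)³` of triples whose two coordinates with index
different from `i` are equal. -/
def HV (m : ℕ) (i : Fin 3) : Subgroup (Vgrp m) :=
  MonoidHom.ker (MonoidHom.mk' (fun v : Vgrp m => v (i + 1) / v (i + 2))
    (fun _ _ => mul_div_mul_comm _ _ _ _))

/-- `H_i ≤ W`: classes of triples whose two coordinates with index different
from `i` are equal. -/
def Hsub (m : ℕ) (i : Fin 3) : Subgroup (Wgrp m) :=
  (HV m i).map (QuotientGroup.mk' (Δgrp m))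

/-- `H_i`, identified with the subgroup `H_i × {1}` of `M`. -/
def HsubM (m : ℕ) (i : Fin 3) : Subgroup (Mgrp m) :=
  (Hsub m i).map (SemidirectProduct.inl : Wgrp m →* Mgrp m)


def uHom (m : ℕ) : Wgrp m →* Multiplicative (ZMod m) :=
  QuotientGroup.lift (Δgrp m)
    (MonoidHom.mk' (fun v : Vgrp m => Multiplicative.ofAdd
      ((v 0).toAdd + (v 1).toAdd - 2 * (v 2).toAdd))
      (fun v w => by
        simp only [Pi.mul_apply, toAdd_mul, ← ofAdd_add]; congr 1; ring))
    (by
      rintro _ ⟨t, rfl⟩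
      rw [MonoidHom.mem_ker]
      simp only [diagHom, MonoidHom.mk'_apply]
      rw [← ofAdd_zero]; congr 1; ring)

def vHom (m : ℕ) : Wgrp m →* Multiplicative (ZMod m) :=
  QuotientGroup.lift (Δgrp m)
    (MonoidHom.mk' (fun v : Vgrp m => Multiplicative.ofAdd
      ((v 0).toAdd - (v 1).toAdd))
      (fun v w => by
        simp only [Pi.mul_apply, toAdd_mul, ← ofAdd_add]; congr 1; ring))
    (by
      rintro _ ⟨t, rfl⟩
      rw [MonoidHom.mem_ker]
      simp only [diagHom, MonoidHom.mk'_apply]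
      rw [← ofAdd_zero]; congr 1; ring)

def uu {m : ℕ} (w : Wgrp m) : ZMod m := (uHom m w).toAdd
def vv {m : ℕ} (w : Wgrp m) : ZMod m := (vHom m w).toAdd

lemma uu_mul {m : ℕ} (w z : Wgrp m) : uu (w * z) = uu w + uu z := by simp [uu]
lemma vv_mul {m : ℕ} (w z : Wgrp m) : vv (w * z) = vv w + vv z := by simp [vv]
lemma uu_one {m : ℕ} : uu (1 : Wgrp m) = 0 := by simp [uu]
lemma vv_one {m : ℕ} : vv (1 : Wgrp m) = 0 := by simp [vv]
lemma uu_inv {m : ℕ} (w : Wgrp m) : uu (w⁻¹) = - uu w := by simp [uu]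
lemma vv_inv {m : ℕ} (w : Wgrp m) : vv (w⁻¹) = - vv w := by simp [vv]
lemma uu_mk {m : ℕ} (v : Vgrp m) :
    uu (QuotientGroup.mk v : Wgrp m) = (v 0).toAdd + (v 1).toAdd - 2 * (v 2).toAdd := rfl
lemma vv_mk {m : ℕ} (v : Vgrp m) :
    vv (QuotientGroup.mk v : Wgrp m) = (v 0).toAdd - (v 1).toAdd := rfl

lemma uu_swap {m : ℕ} (w : Wgrp m) : uu (permW m (Equiv.swap 0 1) w) = uu w := by
  refine QuotientGroup.induction_on w (fun v => ?_)
  change uu (QuotientGroup.mk (permV m (Equiv.swap 0 1) v) : Wgrp m) = _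
  rw [uu_mk, uu_mk]
  change (v 1).toAdd + (v 0).toAdd - 2 * (v 2).toAdd = _
  ring

lemma vv_swap {m : ℕ} (w : Wgrp m) : vv (permW m (Equiv.swap 0 1) w) = - vv w := by
  refine QuotientGroup.induction_on w (fun v => ?_)
  change vv (QuotientGroup.mk (permV m (Equiv.swap 0 1) v) : Wgrp m) = _
  rw [vv_mk, vv_mk]
  change (v 1).toAdd - (v 0).toAdd = _
  ring

lemma two_cancel {m : ℕ} (hm : Odd m) {x : ZMod m} (h : 2 * x = 0) : x = 0 := by
  have : IsUnit (2 : ZMod m) := by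
    have := (ZMod.isUnit_iff_coprime 2 m).2 (Nat.coprime_two_left.2 hm)
    simpa using this
  exact (this.mul_right_eq_zero).1 h

lemma half_exists {m : ℕ} (hm : Odd m) : ∃ h : ZMod m, 2 * h = 1 := by
  have : IsUnit (2 : ZMod m) := by
    have := (ZMod.isUnit_iff_coprime 2 m).2 (Nat.coprime_two_left.2 hm)
    simpa using this
  exact this.exists_right_inv

lemma ext_zero {m : ℕ} (hm : Odd m) (w : Wgrp m) (h1 : uu w = 0) (h2 : vv w = 0) : w = 1 := by
  induction w using QuotientGroup.induction_on with
  | H v =>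
    rw [uu_mk] at h1
    rw [vv_mk] at h2
    rw [QuotientGroup.eq_one_iff]
    have h01 : (v 0).toAdd = (v 1).toAdd := sub_eq_zero.1 h2
    have h02 : (v 0).toAdd = (v 2).toAdd := by
      apply sub_eq_zero.1
      apply two_cancel hm
      rw [← h1, ← h01]; ring
    refine ⟨v 0, ?_⟩
    funext i
    fin_cases i
    · rfl
    · exact h01
    · exact h02

lemma ext_uv {m : ℕ} (hm : Odd m) (w z : Wgrp m) (h1 : uu w = uu z) (h2 : vv w = vv z) :
    w = z := by
  have := ext_zero hm (w * z⁻¹) (by rw [uu_mul, uu_inv, h1]; ring)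
    (by rw [vv_mul, vv_inv, h2]; ring)
  exact mul_inv_eq_one.1 this

lemma surj_uv {m : ℕ} (hm : Odd m) (x y : ZMod m) : ∃ w : Wgrp m, uu w = x ∧ vv w = y := by
  obtain ⟨h, hh⟩ := half_exists hm
  refine ⟨QuotientGroup.mk (fun i => Multiplicative.ofAdd
    (![h * (x + y), h * (x - y), 0] i)), ?_, ?_⟩
  · rw [uu_mk]; simp; linear_combination x * hh
  · rw [vv_mk]; simp; linear_combination y * hh

lemma mem_H {m : ℕ} (i : Fin 3) (v : Vgrp m) :
    (QuotientGroup.mk v : Wgrp m) ∈ Hsub m i ↔ (v (i+1)).toAdd = (v (i+2)).toAdd := by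
  constructor
  · rintro ⟨z, hz, hzv⟩
    have h1 : z (i+1) = z (i+2) := div_eq_one.1 hz
    have h2 : z⁻¹ * v ∈ Δgrp m := QuotientGroup.eq.1 hzv
    obtain ⟨t, ht⟩ := h2
    have e1 := congrFun ht (i+1)
    have e2 := congrFun ht (i+2)
    have e3 : (z⁻¹ * v) (i+1) = (z⁻¹ * v) (i+2) := e1.symm.trans e2
    simp only [Pi.mul_apply, Pi.inv_apply, h1] at e3
    exact congrArg _ (mul_left_cancel e3)
  · intro h
    exact ⟨v, div_eq_one.2 h, rfl⟩

lemma mem_H0 {m : ℕ} (hm : Odd m) (w : Wgrp m) : w ∈ Hsub m 0 ↔ uu w = vv w := by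
  induction w using QuotientGroup.induction_on with
  | H v =>
    rw [uu_mk, vv_mk, mem_H]
    change (v 1).toAdd = (v 2).toAdd ↔ _
    constructor
    · intro h; rw [h]; ring
    · intro h
      apply sub_eq_zero.1; apply two_cancel hm; linear_combination h

lemma mem_H1 {m : ℕ} (hm : Odd m) (w : Wgrp m) : w ∈ Hsub m 1 ↔ uu w = - vv w := by
  induction w using QuotientGroup.induction_on with
  | H v =>
    rw [uu_mk, vv_mk, mem_H]
    change (v 2).toAdd = (v 0).toAdd ↔ _
    constructor
    · intro h; rw [h]; ring
    · intro h
      symm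
      apply sub_eq_zero.1; apply two_cancel hm; linear_combination h

lemma mem_H2 {m : ℕ} (w : Wgrp m) : w ∈ Hsub m 2 ↔ vv w = 0 := by
  induction w using QuotientGroup.induction_on with
  | H v =>
    rw [vv_mk, mem_H]
    change (v 0).toAdd = (v 1).toAdd ↔ _
    rw [sub_eq_zero]

lemma mem_HM {m : ℕ} (i : Fin 3) (g : Mgrp m) :
    g ∈ HsubM m i ↔ g.right = 1 ∧ g.left ∈ Hsub m i := by
  constructor
  · rintro ⟨w, hw, rfl⟩
    exact ⟨rfl, hw⟩
  · rintro ⟨h1, h2⟩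
    exact ⟨g.left, h2, by ext1 <;> simp [h1]⟩

lemma cardM {m : ℕ} (hm : Odd m) (S : Set (Mgrp m)) (P : ZMod m → ZMod m → Prop)
    (σ : Equiv.Perm (Fin 3))
    (h : ∀ g : Mgrp m, g ∈ S ↔ g.right = σ ∧ P (uu g.left) (vv g.left)) :
    Nat.card S = Nat.card {p : ZMod m × ZMod m // P p.1 p.2} := by
  refine Nat.card_congr (Equiv.ofBijective
    (fun g => ⟨(uu g.1.left, vv g.1.left), ((h g.1).1 g.2).2⟩) ⟨?_, ?_⟩)
  · rintro ⟨g, hg⟩ ⟨k, hk⟩ hgk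
    simp only [Subtype.mk.injEq, Prod.mk.injEq] at hgk
    apply Subtype.ext
    exact SemidirectProduct.ext (ext_uv hm _ _ hgk.1 hgk.2)
      (((h g).1 hg).1.trans ((h k).1 hk).1.symm)
  · rintro ⟨⟨x, y⟩, hp⟩
    obtain ⟨w, rfl, rfl⟩ := surj_uv hm x y
    exact ⟨⟨⟨w, σ⟩, (h _).2 ⟨rfl, hp⟩⟩, rfl⟩

lemma card_tors {m : ℕ} [NeZero m] {c : ℕ} (h : c ∣ m) :
    Nat.card {x : ZMod m // (c : ZMod m) * x = 0} = c := by
  have := IsCyclic.card_powMonoidHom_ker (G := Multiplicative (ZMod m)) c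
  rw [Nat.card_congr Multiplicative.toAdd, Nat.card_zmod, Nat.gcd_eq_right h] at this
  conv_rhs => rw [← this]
  refine Nat.card_congr (Equiv.subtypeEquiv Multiplicative.ofAdd (fun x => ?_))
  rw [MonoidHom.mem_ker, powMonoidHom_apply, ← ofAdd_nsmul, ofAdd_eq_one, nsmul_eq_mul]

lemma swap_z (σ : Equiv.Perm (Fin 3)) :
    σ ∈ Subgroup.zpowers (Equiv.swap (0 : Fin 3) 1) ↔ σ = 1 ∨ σ = Equiv.swap 0 1 := by
  constructor
  · intro h
    obtain ⟨k, rfl⟩ := Subgroup.mem_zpowers_iff.1 h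
    rcases Int.even_or_odd' k with ⟨j, rfl | rfl⟩
    · left; rw [zpow_mul]; simp [zpow_ofNat, pow_two]
    · right; rw [zpow_add, zpow_mul]; simp [zpow_ofNat, pow_two]
  · rintro (rfl | rfl)
    · exact one_mem _
    · exact Subgroup.mem_zpowers _

def GG (m c d : ℕ) : Subgroup (Mgrp m) where
  carrier := {g | ((c : ZMod m) * uu g.left = 0 ∧ (d : ZMod m) * vv g.left = 0) ∧
    (g.right = 1 ∨ g.right = Equiv.swap 0 1)}
  one_mem' := by simp [uu_one, vv_one]
  mul_mem' := by
    rintro g k ⟨⟨h1, h2⟩, h3⟩ ⟨⟨h4, h5⟩, h6⟩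
    refine ⟨?_, ?_⟩
    · rw [SemidirectProduct.mul_left]
      rcases h3 with h3 | h3
      · rw [h3, uu_mul, vv_mul]; simp [mul_add, *]
      · rw [h3, uu_mul, vv_mul, uu_swap, vv_swap]; simp [mul_add, *]
    · rw [SemidirectProduct.mul_right]
      rcases h3 with h3 | h3 <;> rcases h6 with h6 | h6 <;> simp [h3, h6]
  inv_mem' := by
    rintro g ⟨⟨h1, h2⟩, h3⟩
    refine ⟨?_, ?_⟩
    · rw [SemidirectProduct.inv_left]
      rcases h3 with h3 | h3
      · rw [h3]; simp [uu_inv, vv_inv, *]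
      · rw [h3, Equiv.swap_inv, uu_swap, vv_swap, uu_inv, vv_inv]; simp [*]
    · rw [SemidirectProduct.inv_right]
      rcases h3 with h3 | h3 <;> simp [h3]

lemma mem_GG {m c d : ℕ} (g : Mgrp m) : g ∈ GG m c d ↔
    ((c : ZMod m) * uu g.left = 0 ∧ (d : ZMod m) * vv g.left = 0) ∧
    (g.right = 1 ∨ g.right = Equiv.swap 0 1) := Iff.rfl

lemma mem_NGG {m c d : ℕ} (g : Mgrp m) : g ∈ NG (GG m c d) ↔
    g.right = 1 ∧ ((c : ZMod m) * uu g.left = 0 ∧ (d : ZMod m) * vv g.left = 0) := by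
  unfold NG
  rw [Subgroup.mem_inf, mem_GG, MonoidHom.mem_ker]
  change _ ∧ g.right = 1 ↔ _
  tauto

lemma card_cd {m : ℕ} [NeZero m] {c d : ℕ} (hc : c ∣ m) (hd : d ∣ m) :
    Nat.card {p : ZMod m × ZMod m // (c : ZMod m) * p.1 = 0 ∧ (d : ZMod m) * p.2 = 0}
      = c * d := by
  rw [← card_tors hc, ← card_tors hd, ← Nat.card_prod]
  simp only [card_tors hc, card_tors hd]
  exact Nat.card_congr (Equiv.subtypeProdEquivProd
    (p := fun x : ZMod m => (c : ZMod m) * x = 0) (q := fun x : ZMod m => (d : ZMod m) * x = 0))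

lemma gcd_tors {m c d : ℕ} (x : ZMod m) :
    ((c : ZMod m) * x = 0 ∧ (d : ZMod m) * x = 0) ↔ ((Nat.gcd c d : ℕ) : ZMod m) * x = 0 := by
  constructor
  · rintro ⟨h1, h2⟩
    have h := congrArg (fun z : ℤ => (z : ZMod m)) (Nat.gcd_eq_gcd_ab c d)
    push_cast at h
    rw [h]
    linear_combination (Nat.gcdA c d : ZMod m) * h1 + (Nat.gcdB c d : ZMod m) * h2
  · intro h
    obtain ⟨k, hk⟩ := Nat.gcd_dvd_left c d
    obtain ⟨l, hl⟩ := Nat.gcd_dvd_right c d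
    have hk' := congrArg (fun z : ℕ => (z : ZMod m)) hk
    have hl' := congrArg (fun z : ℕ => (z : ZMod m)) hl
    simp only [Nat.cast_mul] at hk' hl'
    constructor
    · rw [hk']; linear_combination (k : ZMod m) * h
    · rw [hl']; linear_combination (l : ZMod m) * h

lemma order_two {m : ℕ} (hm : Odd m) (g : Mgrp m) (hg : g.right = Equiv.swap 0 1) :
    orderOf g = 2 ↔ uu g.left = 0 := by
  have hne : g ≠ 1 := by
    rintro rfl
    have h : (1 : Equiv.Perm (Fin 3)) = Equiv.swap 0 1 := hg
    exact absurd h (by decide)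
  rw [orderOf_eq_prime_iff, and_iff_left hne, pow_two]
  constructor
  · intro h
    have h' := congrArg (fun z : Mgrp m => uu z.left) h
    simp only [SemidirectProduct.mul_left, hg, uu_mul, uu_swap, SemidirectProduct.one_left,
      uu_one] at h'
    apply two_cancel hm; linear_combination h'
  · intro h
    refine SemidirectProduct.ext ?_ ?_
    · apply ext_zero hm
      · simp [hg, uu_mul, uu_swap, h]
      · simp [hg, vv_mul, vv_swap]
    · simp [hg]

/-- Proposition 3.3(i) of Dalla Volta–Montanucci–Zini (`q` even, `m = q+1` odd):
existence part, for subgroups `G ≤ (C_{q+1} × C_{q+1}) ⋊ S₃` inducing on the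
self-polar triangle the transposition swapping `P₁, P₂` and fixing `P₃`. -/
theorem stmt5 (m : ℕ) (hm : 3 ≤ m) (hmodd : Odd m) (a c e : ℕ)
    (ha0 : 0 < a) (hc0 : 0 < c) (he0 : 0 < e)
    (h1 : e ∣ m ^ 2) (h2 : c ∣ m) (h3 : a ∣ c) (h4 : a * c ∣ e)
    (h5 : e / a ∣ m) (h6 : Nat.gcd (e / (a * c)) (c / a) = 1) :
    ∃ G : Subgroup (Mgrp m),
      Nat.card ↥G = 2 * e ∧
      Nat.card ↥(NG G) = e ∧
      G.map (SemidirectProduct.rightHom : Mgrp m →* Equiv.Perm (Fin 3)) =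
        Subgroup.zpowers (Equiv.swap (0 : Fin 3) 1) ∧
      Nat.card ↥(NG G ⊓ HsubM m 0) = a ∧
      Nat.card ↥(NG G ⊓ HsubM m 1) = a ∧
      Nat.card ↥(NG G ⊓ HsubM m 2) = c ∧
      Nat.card {x : Mgrp m // x ∈ G ∧ x ∉ NG G ∧ orderOf x = 2} = e / c := by
  have : NeZero m := ⟨by omega⟩
  obtain ⟨b, rfl⟩ := h3
  obtain ⟨f, rfl⟩ := h4
  have hb0 : 0 < b := Nat.pos_of_ne_zero (by rintro rfl; simp at hc0)
  have e1 : a * (a * b) * f / (a * (a * b)) = f :=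
    Nat.mul_div_cancel_left _ (Nat.mul_pos ha0 hc0)
  have e2 : a * b / a = b := Nat.mul_div_cancel_left _ ha0
  have e3 : a * (a * b) * f / a = (a * b) * f := by
    rw [mul_assoc]; exact Nat.mul_div_cancel_left _ ha0
  have e4 : a * (a * b) * f / (a * b) = a * f := by
    rw [show a * (a * b) * f = (a * b) * (a * f) by ring]
    exact Nat.mul_div_cancel_left _ hc0
  rw [e1, e2] at h6
  rw [e3] at h5
  rw [e4]
  have hd : a * f ∣ m := (Dvd.intro b (by ring)).trans h5
  have ha : a ∣ m := (Dvd.intro _ rfl).trans h2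
  have hgcd : Nat.gcd (a * b) (a * f) = a := by
    rw [Nat.gcd_mul_left, Nat.gcd_comm, h6, mul_one]
  have hcd := card_cd h2 hd
  have he : a * b * (a * f) = a * (a * b) * f := by ring
  rw [he] at hcd
  have hN : Nat.card (NG (GG m (a * b) (a * f))) = a * (a * b) * f := by
    rw [← hcd]
    exact cardM hmodd (NG (GG m (a * b) (a * f)) : Set (Mgrp m))
      (fun x y => ((a * b : ℕ) : ZMod m) * x = 0 ∧ ((a * f : ℕ) : ZMod m) * y = 0) 1 mem_NGG
  have hC := cardM hmodd {g : Mgrp m | g.right = Equiv.swap 0 1 ∧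
    (((a * b : ℕ) : ZMod m) * uu g.left = 0 ∧ ((a * f : ℕ) : ZMod m) * vv g.left = 0)}
    (fun x y => ((a * b : ℕ) : ZMod m) * x = 0 ∧ ((a * f : ℕ) : ZMod m) * y = 0)
    (Equiv.swap 0 1) (fun _ => Iff.rfl)
  rw [hcd] at hC
  have hfin : Finite (Mgrp m) := Finite.of_equiv _ SemidirectProduct.equivProd.symm
  have hs1 : (1 : Equiv.Perm (Fin 3)) ≠ Equiv.swap 0 1 := by decide
  refine ⟨GG m (a * b) (a * f), ?_, hN, ?_, ?_, ?_, ?_, ?_⟩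
  · have hU : (GG m (a * b) (a * f) : Set (Mgrp m)) = (NG (GG m (a * b) (a * f)) : Set (Mgrp m)) ∪
        {g : Mgrp m | g.right = Equiv.swap 0 1 ∧
    (((a * b : ℕ) : ZMod m) * uu g.left = 0 ∧ ((a * f : ℕ) : ZMod m) * vv g.left = 0)} := by
      ext g
      simp only [Set.mem_union, SetLike.mem_coe, mem_NGG, mem_GG, Set.mem_ofPred_eq]
      tauto
    have hdis : Disjoint (NG (GG m (a * b) (a * f)) : Set (Mgrp m))
        {g : Mgrp m | g.right = Equiv.swap 0 1 ∧
    (((a * b : ℕ) : ZMod m) * uu g.left = 0 ∧ ((a * f : ℕ) : ZMod m) * vv g.left = 0)} := by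
      rw [Set.disjoint_left]
      intro g h1 h2
      rw [SetLike.mem_coe, mem_NGG] at h1
      exact hs1 (h1.1.symm.trans h2.1)
    have := Set.ncard_union_eq hdis (Set.toFinite _) (Set.toFinite _)
    rw [← hU, ← Nat.card_coe_set_eq, ← Nat.card_coe_set_eq, ← Nat.card_coe_set_eq, hC] at this
    rw [two_mul]
    refine this.trans ?_
    congr 1
  · ext σ
    rw [swap_z, Subgroup.mem_map]
    constructor
    · rintro ⟨g, hg, rfl⟩
      exact hg.2
    · intro h
      refine ⟨⟨1, σ⟩, ⟨?_, h⟩, rfl⟩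
      simp [uu_one, vv_one]
  · refine (cardM hmodd (NG (GG m (a * b) (a * f)) ⊓ HsubM m 0 : Subgroup (Mgrp m))
      (fun x y => x = y ∧ (a : ZMod m) * y = 0) 1 ?_).trans ?_
    · intro g
      rw [SetLike.mem_coe, Subgroup.mem_inf, mem_NGG, mem_HM, mem_H0 hmodd]
      have := gcd_tors (c := a * b) (d := a * f) (vv g.left)
      rw [hgcd] at this
      rw [← this]
      constructor
      · rintro ⟨⟨h1, h2, h3⟩, -, h4⟩
        rw [h4] at h2
        exact ⟨h1, h4, h2, h3⟩
      · rintro ⟨h1, h4, h2, h3⟩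
        rw [h4]
        exact ⟨⟨h1, h2, h3⟩, h1, rfl⟩
    · conv_rhs => rw [← card_tors ha]
      exact Nat.card_congr
        ⟨fun p => ⟨p.1.2, p.2.2⟩, fun x => ⟨(x.1, x.1), rfl, x.2⟩,
          by rintro ⟨⟨x, y⟩, h1, h2⟩; simp only at h1; subst h1; rfl, fun x => rfl⟩
  · refine (cardM hmodd (NG (GG m (a * b) (a * f)) ⊓ HsubM m 1 : Subgroup (Mgrp m))
      (fun x y => x = -y ∧ (a : ZMod m) * y = 0) 1 ?_).trans ?_
    · intro g
      rw [SetLike.mem_coe, Subgroup.mem_inf, mem_NGG, mem_HM, mem_H1 hmodd]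
      have := gcd_tors (c := a * b) (d := a * f) (vv g.left)
      rw [hgcd] at this
      rw [← this]
      constructor
      · rintro ⟨⟨h1, h2, h3⟩, -, h4⟩
        rw [h4, mul_neg, neg_eq_zero] at h2
        exact ⟨h1, h4, h2, h3⟩
      · rintro ⟨h1, h4, h2, h3⟩
        rw [h4, mul_neg, neg_eq_zero]
        exact ⟨⟨h1, h2, h3⟩, h1, rfl⟩
    · conv_rhs => rw [← card_tors ha]
      exact Nat.card_congr
        ⟨fun p => ⟨p.1.2, p.2.2⟩, fun x => ⟨(-x.1, x.1), rfl, x.2⟩,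
          by rintro ⟨⟨x, y⟩, h1, h2⟩; simp only at h1; subst h1; rfl, fun x => rfl⟩
  · refine (cardM hmodd (NG (GG m (a * b) (a * f)) ⊓ HsubM m 2 : Subgroup (Mgrp m))
      (fun x y => y = 0 ∧ ((a * b : ℕ) : ZMod m) * x = 0) 1 ?_).trans ?_
    · intro g
      rw [SetLike.mem_coe, Subgroup.mem_inf, mem_NGG, mem_HM, mem_H2]
      constructor
      · rintro ⟨⟨h1, h2, h3⟩, -, h4⟩
        exact ⟨h1, h4, h2⟩
      · rintro ⟨h1, h4, h2⟩
        exact ⟨⟨h1, h2, by rw [h4, mul_zero]⟩, h1, h4⟩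
    · conv_rhs => rw [← card_tors h2]
      exact Nat.card_congr
        ⟨fun p => ⟨p.1.1, p.2.2⟩, fun x => ⟨(x.1, 0), rfl, x.2⟩,
          by rintro ⟨⟨x, y⟩, h1, h2⟩; simp only at h1; subst h1; rfl, fun x => rfl⟩
  · refine (cardM hmodd {x : Mgrp m | x ∈ GG m (a * b) (a * f) ∧ x ∉ NG (GG m (a * b) (a * f)) ∧
        orderOf x = 2}
      (fun x y => x = 0 ∧ ((a * f : ℕ) : ZMod m) * y = 0) (Equiv.swap 0 1) ?_).trans ?_
    · intro g
      rw [Set.mem_ofPred_eq, mem_NGG, mem_GG]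
      constructor
      · rintro ⟨⟨h1, h2⟩, h3, h4⟩
        have hg : g.right = Equiv.swap 0 1 := by tauto
        exact ⟨hg, (order_two hmodd g hg).1 h4, h1.2⟩
      · rintro ⟨hg, h1, h2⟩
        refine ⟨⟨⟨by rw [h1, mul_zero], h2⟩, Or.inr hg⟩, ?_, (order_two hmodd g hg).2 h1⟩
        rintro ⟨h, -⟩
        exact hs1 (h.symm.trans hg)
    · conv_rhs => rw [← card_tors hd]
      exact Nat.card_congr
        ⟨fun p => ⟨p.1.2, p.2.2⟩, fun x => ⟨(0, x.1), rfl, x.2⟩,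
          by rintro ⟨⟨x, y⟩, h1, h2⟩; simp only at h1; subst h1; rfl, fun x => rfl⟩
end

section
/- Let m ≥ 3 be odd and let G ≤ M be a subgroup such that π(G) has order 2, generated by a transposition fixing the index k and swapping the indices i and j. Put e = |N(G)|, a = |N(G) ∩ H_i| and c = |N(G) ∩ H_k|. Then |N(G) ∩ H_j| = a, c | m, a | c, a*c | e, (e/a) | m, gcd(e/(a*c), c/a) = 1, and the number of elements of order 2 in G ∖ N(G) equals e/c. -/
lemma aux_mem_iff {m : ℕ} [NeZero m] (C : AddSubgroup (ZMod m)) (x : ZMod m) :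
    x ∈ C ↔ Nat.card C • x = 0 := by
  have hdvd : Nat.card C ∣ m := by
    have := C.card_addSubgroup_dvd_card
    rwa [Nat.card_zmod] at this
  have hle : C ≤ (nsmulAddMonoidHom (Nat.card C) : ZMod m →+ ZMod m).ker := by
    intro y hy
    have h := card_nsmul_eq_zero' (x := (⟨y, hy⟩ : C))
    exact congrArg Subtype.val h
  have hcard : Nat.card (nsmulAddMonoidHom (Nat.card C) : ZMod m →+ ZMod m).ker = Nat.card C := by
    rw [IsAddCyclic.card_nsmulAddMonoidHom_ker, Nat.card_zmod]
    exact Nat.gcd_eq_right hdvd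
  have heq := AddSubgroup.eq_of_le_of_card_ge hle hcard.le
  constructor
  · intro h
    exact hle h
  · intro h
    rw [heq]
    exact h

lemma aux_card_inf {m : ℕ} [NeZero m] (C D : AddSubgroup (ZMod m)) :
    Nat.card (C ⊓ D : AddSubgroup (ZMod m)) = Nat.gcd (Nat.card C) (Nat.card D) := by
  have hdvd : Nat.card C ∣ m := by
    have := C.card_addSubgroup_dvd_card
    rwa [Nat.card_zmod] at this
  have h : C ⊓ D =
      (nsmulAddMonoidHom (Nat.gcd (Nat.card C) (Nat.card D)) : ZMod m →+ ZMod m).ker := by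
    ext x
    rw [AddSubgroup.mem_inf, aux_mem_iff C, aux_mem_iff D]
    change _ ↔ Nat.gcd (Nat.card C) (Nat.card D) • x = 0
    rw [← addOrderOf_dvd_iff_nsmul_eq_zero, ← addOrderOf_dvd_iff_nsmul_eq_zero,
      ← addOrderOf_dvd_iff_nsmul_eq_zero, Nat.dvd_gcd_iff]
  rw [h, IsAddCyclic.card_nsmulAddMonoidHom_ker, Nat.card_zmod]
  exact Nat.gcd_eq_right ((Nat.gcd_dvd_left _ _).trans hdvd)

lemma aux_arith (m c d : ℕ) (hc0 : 0 < c) (hc : c ∣ m) (hd : d ∣ m) :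
    c ∣ m ∧ Nat.gcd c d ∣ c ∧ Nat.gcd c d * c ∣ c * d ∧ c * d / Nat.gcd c d ∣ m ∧
    Nat.gcd (c * d / (Nat.gcd c d * c)) (c / Nat.gcd c d) = 1 := by
  refine ⟨hc, Nat.gcd_dvd_left _ _, ?_, Nat.lcm_dvd hc hd, ?_⟩
  · rw [mul_comm]
    exact Nat.mul_dvd_mul_left _ (Nat.gcd_dvd_right _ _)
  · rw [mul_comm _ c, Nat.mul_div_mul_left _ _ hc0, Nat.gcd_comm]
    exact Nat.coprime_div_gcd_div_gcd (Nat.gcd_pos_of_pos_left _ hc0)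

/-- pullback of `G` along a one-parameter family -/
def auxSub {m : ℕ} {M : Type*} [Group M] (F : ZMod m → ZMod m → M)
    (hF : ∀ p q p' q', F p q * F p' q' = F (p + p') (q + q')) (G : Subgroup M)
    (u v : ZMod m) : AddSubgroup (ZMod m) where
  carrier := {x | F (u * x) (v * x) ∈ G}
  add_mem' {a b} ha hb := by
    have := G.mul_mem ha hb
    rw [hF] at this
    simpa [mul_add] using this
  zero_mem' := by
    have h : F 0 0 = 1 := by
      have := hF 0 0 0 0
      simpa using this
    simp [h, G.one_mem]
  neg_mem' {a} ha := by
    have h : F 0 0 = 1 := by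
      have := hF 0 0 0 0
      simpa using this
    have h2 : F (u * -a) (v * -a) = (F (u * a) (v * a))⁻¹ := by
      rw [eq_inv_iff_mul_eq_one, hF, ← h]
      congr 1 <;> ring
    change F (u * -a) (v * -a) ∈ G
    rw [h2]
    exact G.inv_mem ha

lemma mem_auxSub {m : ℕ} {M : Type*} [Group M] (F : ZMod m → ZMod m → M)
    (hF : ∀ p q p' q', F p q * F p' q' = F (p + p') (q + q')) (G : Subgroup M)
    (u v x : ZMod m) : x ∈ auxSub F hF G u v ↔ F (u * x) (v * x) ∈ G := Iff.rfl

theorem aux_main {m : ℕ} (hm : 3 ≤ m) (hmodd : Odd m) {M Q : Type*} [Group M] [Group Q]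
    (π : M →* Q) (s : Q) (hs : s * s = 1) (hs1 : s ≠ 1)
    (F : ZMod m → ZMod m → M)
    (hF : ∀ p q p' q', F p q * F p' q' = F (p + p') (q + q'))
    (hinj : ∀ p q p' q', F p q = F p' q' → p = p' ∧ q = q')
    (hker : ∀ x, π x = 1 ↔ ∃ p q, x = F p q)
    (hconj : ∀ g p q, π g = s → g * F p q = F q p * g)
    (G N Hi Hj Hk : Subgroup M)
    (hG : ∀ x ∈ G, π x = 1 ∨ π x = s) (hGs : ∃ g ∈ G, π g = s)
    (hN : ∀ x, x ∈ N ↔ x ∈ G ∧ π x = 1)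
    (hi : ∀ x, x ∈ Hi ↔ ∃ p, x = F p 0)
    (hj : ∀ x, x ∈ Hj ↔ ∃ p, x = F 0 p)
    (hk : ∀ x, x ∈ Hk ↔ ∃ p, x = F p p)
    (e a c : ℕ) (hE : e = Nat.card N) (hA : a = Nat.card ↥(N ⊓ Hi))
    (hC : c = Nat.card ↥(N ⊓ Hk)) :
    Nat.card ↥(N ⊓ Hj) = a ∧
    c ∣ m ∧ a ∣ c ∧ a * c ∣ e ∧ e / a ∣ m ∧
    Nat.gcd (e / (a * c)) (c / a) = 1 ∧
    Nat.card {x : M // x ∈ G ∧ x ∉ N ∧ orderOf x = 2} = e / c := by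
  have : NeZero m := ⟨by omega⟩
  have hF0 : F 0 0 = 1 := by
    have := hF 0 0 0 0
    simpa using this
  have hπF : ∀ p q, π (F p q) = 1 := fun p q => (hker _).2 ⟨p, q, rfl⟩
  obtain ⟨g, hg, hgs⟩ := hGs
  have hswap : ∀ p q, F p q ∈ G → F q p ∈ G := by
    intro p q h
    have h2 : F q p = g * F p q * g⁻¹ := by rw [hconj g p q hgs]; group
    rw [h2]
    exact G.mul_mem (G.mul_mem hg h) (G.inv_mem hg)
  obtain ⟨t, ht⟩ := hmodd
  have hhalf : ((t : ZMod m) + 1) * 2 = 1 := by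
    have : ((2 * t + 1 : ℕ) : ZMod m) = 0 := by rw [← ht]; simp
    push_cast at this
    linear_combination this
  have hpow : ∀ p q (n : ℕ), F p q ^ n = F (n * p) (n * q) := by
    intro p q n
    induction n with
    | zero => simp [hF0]
    | succ n ih => rw [pow_succ, ih, hF]; congr 1 <;> push_cast <;> ring
  have hhalfG : ∀ p q, F p q ∈ G → F ((t + 1) * p) ((t + 1) * q) ∈ G := by
    intro p q h
    have := G.pow_mem h (t + 1)
    rw [hpow] at this
    push_cast at this
    exact this
  set A := auxSub F hF G 1 0 with hAdef
  set B := auxSub F hF G 0 1 with hBdef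
  set C := auxSub F hF G 1 1 with hCdef
  set D := auxSub F hF G 1 (-1) with hDdef
  have mA : ∀ x, x ∈ A ↔ F x 0 ∈ G := by intro x; rw [hAdef, mem_auxSub]; simp
  have mB : ∀ x, x ∈ B ↔ F 0 x ∈ G := by intro x; rw [hBdef, mem_auxSub]; simp
  have mC : ∀ x, x ∈ C ↔ F x x ∈ G := by intro x; rw [hCdef, mem_auxSub]; simp
  have mD : ∀ x, x ∈ D ↔ F x (-x) ∈ G := by intro x; rw [hDdef, mem_auxSub]; simp
  have hAB : A = B := by
    ext x
    rw [mA, mB]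
    exact ⟨hswap _ _, hswap _ _⟩
  have hACD : A = C ⊓ D := by
    ext x
    rw [AddSubgroup.mem_inf, mA, mC, mD]
    constructor
    · intro h
      have h' := hswap _ _ h
      have hm1 := G.mul_mem h h'
      rw [hF] at hm1
      refine ⟨by simpa using hm1, ?_⟩
      have h2 : F 0 (-x) = (F 0 x)⁻¹ := by
        rw [eq_inv_iff_mul_eq_one, hF, ← hF0]
        congr 1 <;> ring
      have hm2 := G.mul_mem h (G.inv_mem h')
      rw [← h2, hF] at hm2
      simpa using hm2
    · rintro ⟨h, h'⟩
      have h3 := hhalfG _ _ (hF _ _ _ _ ▸ G.mul_mem h h')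
      have e1 : (t + 1 : ZMod m) * (x + x) = x := by linear_combination x * hhalf
      have e2 : (t + 1 : ZMod m) * (x + -x) = 0 := by ring
      rwa [e1, e2] at h3
  have cardA : a = Nat.card A := by
    rw [hA]
    symm
    refine Nat.card_congr (Equiv.ofBijective
      (fun x : A => (⟨F x 0, ⟨(hN _).2 ⟨(mA _).1 x.2, hπF _ _⟩, (hi _).2 ⟨_, rfl⟩⟩⟩ :
        ↥(N ⊓ Hi))) ⟨?_, ?_⟩)
    · intro x y h
      exact Subtype.ext (hinj _ _ _ _ (congrArg Subtype.val h)).1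
    · rintro ⟨x, hx1, hx2⟩
      obtain ⟨p, rfl⟩ := (hi _).1 hx2
      exact ⟨⟨p, (mA p).2 ((hN _).1 hx1).1⟩, rfl⟩
  have cardB : Nat.card ↥(N ⊓ Hj) = Nat.card B := by
    symm
    refine Nat.card_congr (Equiv.ofBijective
      (fun x : B => (⟨F 0 x, ⟨(hN _).2 ⟨(mB _).1 x.2, hπF _ _⟩, (hj _).2 ⟨_, rfl⟩⟩⟩ :
        ↥(N ⊓ Hj))) ⟨?_, ?_⟩)
    · intro x y h
      exact Subtype.ext (hinj _ _ _ _ (congrArg Subtype.val h)).2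
    · rintro ⟨x, hx1, hx2⟩
      obtain ⟨p, rfl⟩ := (hj _).1 hx2
      exact ⟨⟨p, (mB p).2 ((hN _).1 hx1).1⟩, rfl⟩
  have cardC : c = Nat.card C := by
    rw [hC]
    symm
    refine Nat.card_congr (Equiv.ofBijective
      (fun x : C => (⟨F x x, ⟨(hN _).2 ⟨(mC _).1 x.2, hπF _ _⟩, (hk _).2 ⟨_, rfl⟩⟩⟩ :
        ↥(N ⊓ Hk))) ⟨?_, ?_⟩)
    · intro x y h
      exact Subtype.ext (hinj _ _ _ _ (congrArg Subtype.val h)).1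
    · rintro ⟨x, hx1, hx2⟩
      obtain ⟨p, rfl⟩ := (hk _).1 hx2
      exact ⟨⟨p, (mC p).2 ((hN _).1 hx1).1⟩, rfl⟩
  have cardN : e = Nat.card C * Nat.card D := by
    rw [hE, ← Nat.card_prod]
    symm
    refine Nat.card_congr (Equiv.ofBijective
      (fun x : C × D => (⟨F x.1 x.1 * F x.2 (-x.2),
        (hN _).2 ⟨G.mul_mem ((mC _).1 x.1.2) ((mD _).1 x.2.2), by simp [hπF]⟩⟩ : N)) ⟨?_, ?_⟩)
    · rintro ⟨⟨x, hx⟩, ⟨y, hy⟩⟩ ⟨⟨x', hx'⟩, ⟨y', hy'⟩⟩ h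
      have h1 := congrArg Subtype.val h
      simp only [hF] at h1
      obtain ⟨h2, h3⟩ := hinj _ _ _ _ h1
      have hx : x = x' := by
        linear_combination (t + 1 : ZMod m) * (h2 + h3) - (x - x') * hhalf
      have hy : y = y' := by linear_combination h2 - hx
      subst hx hy
      rfl
    · rintro ⟨x, hx⟩
      obtain ⟨hxG, hx1⟩ := (hN _).1 hx
      obtain ⟨p, q, rfl⟩ := (hker _).1 hx1
      have hqp := hswap _ _ hxG
      have h1 := hhalfG _ _ (hF _ _ _ _ ▸ G.mul_mem hxG hqp)
      have h2 : F (-q) (-p) = (F q p)⁻¹ := by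
        rw [eq_inv_iff_mul_eq_one, hF, ← hF0]
        congr 1 <;> ring
      have h3 : F (-q) (-p) ∈ G := h2 ▸ G.inv_mem hqp
      have h4 := hhalfG _ _ (hF _ _ _ _ ▸ G.mul_mem hxG h3)
      refine ⟨⟨⟨(t + 1) * (p + q), (mC _).2 ?_⟩, ⟨(t + 1) * (p + -q), (mD _).2 ?_⟩⟩, ?_⟩
      · convert h1 using 2; ring
      · convert h4 using 2; ring
      · apply Subtype.ext
        simp only [hF]
        congr 1
        · linear_combination p * hhalf
        · linear_combination q * hhalf
  have hss : ∀ x, π x = s → π (x * x) = 1 := by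
    intro x hx
    rw [map_mul, hx, hs]
  -- an involution
  obtain ⟨u, hu, hus, hu2⟩ : ∃ u ∈ G, π u = s ∧ u * u = 1 := by
    refine ⟨g ^ m, G.pow_mem hg m, ?_, ?_⟩
    · rw [map_pow, hgs, ht, pow_succ, pow_mul, pow_two, hs, one_pow, one_mul]
    · obtain ⟨p, q, hpq⟩ := (hker _).1 (hss g hgs)
      rw [← (Commute.refl g).mul_pow, hpq, hpow]
      simp [hF0]
  have cardI : Nat.card {x : M // x ∈ G ∧ x ∉ N ∧ orderOf x = 2} = Nat.card D := by
    symm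
    have key : ∀ p q, (F p q * u) * (F p q * u) = F (p + q) (q + p) := by
      intro p q
      calc (F p q * u) * (F p q * u) = F p q * (u * F p q) * u := by group
        _ = F p q * F q p * (u * u) := by rw [hconj u p q hus]; group
        _ = _ := by rw [hu2, hF, mul_one]
    have hπ : ∀ p q, π (F p q * u) = s := by intro p q; rw [map_mul, hπF, hus, one_mul]
    refine Nat.card_congr (Equiv.ofBijective
      (fun x : D => (⟨F x (-x) * u, G.mul_mem ((mD _).1 x.2) hu, ?_, ?_⟩ :
        {x : M // x ∈ G ∧ x ∉ N ∧ orderOf x = 2})) ⟨?_, ?_⟩)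
    · intro h
      have := ((hN _).1 h).2
      rw [hπ] at this
      exact hs1 this
    · apply orderOf_eq_prime
      · rw [pow_two, key, ← hF0]
        congr 1 <;> ring
      · intro h
        have := hπ x (-x)
        rw [h, map_one] at this
        exact hs1 this.symm
    · intro x y h
      have h1 := mul_right_cancel (congrArg Subtype.val h)
      exact Subtype.ext (hinj _ _ _ _ h1).1
    · rintro ⟨x, hxG, hxN, hx2⟩
      have hxs : π x = s := by
        rcases hG x hxG with h | h
        · exact absurd ((hN _).2 ⟨hxG, h⟩) hxN
        · exact h
      have h1 : π (x * u⁻¹) = 1 := by rw [map_mul, map_inv, hxs, hus, mul_inv_cancel]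
      obtain ⟨p, q, hpq⟩ := (hker _).1 h1
      have hx : x = F p q * u := by rw [← hpq]; group
      have h2 : x * x = 1 := by rw [← pow_two, ← hx2, pow_orderOf_eq_one]
      rw [hx, key, ← hF0] at h2
      have hq : q = -p := by linear_combination (hinj _ _ _ _ h2).1
      subst hq
      refine ⟨⟨p, (mD _).2 ?_⟩, Subtype.ext hx.symm⟩
      rw [← hpq]
      exact G.mul_mem hxG (G.inv_mem hu)
  have hdC : Nat.card C ∣ m := by
    have := C.card_addSubgroup_dvd_card
    rwa [Nat.card_zmod] at this
  have hdD : Nat.card D ∣ m := by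
    have := D.card_addSubgroup_dvd_card
    rwa [Nat.card_zmod] at this
  have hc0 : 0 < Nat.card C := Nat.card_pos
  have hag : a = Nat.gcd (Nat.card C) (Nat.card D) := by rw [cardA, hACD, aux_card_inf]
  obtain ⟨r1, r2, r3, r4, r5⟩ := aux_arith m _ _ hc0 hdC hdD
  refine ⟨by rw [cardB, cardA, hAB], ?_⟩
  rw [cardI, hag, cardN, cardC]
  exact ⟨r1, r2, r3, r4, r5, (Nat.mul_div_cancel_left _ hc0).symm⟩

/-- coordinates on `W` -/
def auxF (m : ℕ) (i j : Fin 3) (p q : ZMod m) : Mgrp m :=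
  SemidirectProduct.inl (QuotientGroup.mk (s := Δgrp m)
    (fun t => Multiplicative.ofAdd (if t = i then p else if t = j then q else 0)))

lemma aux_mk_eq (m : ℕ) (v w : Vgrp m) :
    (QuotientGroup.mk (s := Δgrp m) v = QuotientGroup.mk w) ↔ ∃ d, ∀ t, w t = v t * d := by
  rw [QuotientGroup.eq]
  constructor
  · rintro ⟨d, hd⟩
    refine ⟨d, fun t => ?_⟩
    have := congrFun hd t
    change d = (v t)⁻¹ * w t at this
    rw [this]; simp
  · rintro ⟨d, hd⟩
    refine ⟨d, ?_⟩
    funext t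
    change d = (v t)⁻¹ * w t
    rw [hd]; simp

lemma aux_mem_H (m : ℕ) (p q r : Fin 3) (hpq : p ≠ q) (hpr : p ≠ r) (hqr : q ≠ r) (v : Vgrp m) :
    (QuotientGroup.mk (s := Δgrp m) v ∈ Hsub m r) ↔ v p = v q := by
  have hV : ∀ w : Vgrp m, w ∈ HV m r ↔ w p = w q := by
    intro w
    change w (r + 1) / w (r + 2) = 1 ↔ _
    rw [div_eq_one]
    have : (p = r + 1 ∧ q = r + 2) ∨ (q = r + 1 ∧ p = r + 2) := by
      revert p q r; decide
    rcases this with ⟨rfl, rfl⟩ | ⟨rfl, rfl⟩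
    · rfl
    · exact eq_comm
  constructor
  · rintro ⟨w, hw, h⟩
    obtain ⟨d, hd⟩ := (aux_mk_eq m w v).1 h
    rw [hd, hd, (hV w).1 hw]
  · intro h
    exact ⟨v, (hV v).2 h, rfl⟩

lemma aux_mem_HM (m : ℕ) (p q r i j : Fin 3) (hpq : p ≠ q) (hpr : p ≠ r) (hqr : q ≠ r)
    (x y : ZMod m) :
    auxF m i j x y ∈ HsubM m r ↔
      (if p = i then x else if p = j then y else 0) =
      (if q = i then x else if q = j then y else 0) := by
  have h := aux_mem_H m p q r hpq hpr hqr
    (fun t => Multiplicative.ofAdd (if t = i then x else if t = j then y else 0))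
  rw [Multiplicative.ofAdd.injective.eq_iff] at h
  rw [← h]
  exact Subgroup.mem_map_iff_mem SemidirectProduct.inl_injective

lemma aux_ker (m : ℕ) (i j k : Fin 3) (hij : i ≠ j) (hik : i ≠ k) (hjk : j ≠ k) (x : Mgrp m) :
    (SemidirectProduct.rightHom : Mgrp m →* Equiv.Perm (Fin 3)) x = 1 ↔
      ∃ p q, x = auxF m i j p q := by
  constructor
  · intro h
    obtain ⟨w, s⟩ := x
    change s = 1 at h
    subst h
    induction w using QuotientGroup.induction_on with
    | H v =>
      refine ⟨(v i).toAdd - (v k).toAdd, (v j).toAdd - (v k).toAdd, ?_⟩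
      refine SemidirectProduct.ext ?_ rfl
      change QuotientGroup.mk v = QuotientGroup.mk _
      rw [aux_mk_eq]
      refine ⟨(v k)⁻¹, fun t => ?_⟩
      have ht : t = i ∨ t = j ∨ t = k := by revert i j k t; decide
      apply Multiplicative.toAdd.injective
      rcases ht with rfl | rfl | rfl
      · simp [sub_eq_add_neg]
      · simp [sub_eq_add_neg, hij.symm]
      · simp [hik.symm, hjk.symm]
  · rintro ⟨p, q, rfl⟩
    rfl

lemma aux_conj (m : ℕ) (i j : Fin 3) (hij : i ≠ j)
    (g : Mgrp m) (p q : ZMod m) (hg : (SemidirectProduct.rightHom : Mgrp m →* _) g = Equiv.swap i j) :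
    g * auxF m i j p q = auxF m i j q p * g := by
  obtain ⟨w, s⟩ := g
  change s = _ at hg
  subst hg
  refine SemidirectProduct.ext ?_ ?_
  · have h1 : (permW m) (auxF m i j q p).right w = w := by
      change (permW m) 1 w = w
      rw [map_one]; rfl
    rw [SemidirectProduct.mul_left, SemidirectProduct.mul_left, h1, mul_comm]
    congr 1
    change QuotientGroup.mk _ = QuotientGroup.mk _
    congr 1
    funext t
    change Multiplicative.ofAdd (if (Equiv.swap i j).symm t = i then p else
      if (Equiv.swap i j).symm t = j then q else 0) = Multiplicative.ofAdd _
    congr 1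
    rw [Equiv.symm_swap]
    by_cases h1 : t = i
    · subst h1; simp [hij.symm]
    · by_cases h2 : t = j
      · subst h2; simp [hij.symm]
      · rw [Equiv.swap_apply_of_ne_of_ne h1 h2]; simp [h1, h2]
  · change Equiv.swap i j * 1 = 1 * Equiv.swap i j
    simp

/-- Proposition 3.3(ii) of Dalla Volta–Montanucci–Zini (`q` even, `m = q+1` odd):
necessity part, for a subgroup `G ≤ M` whose image in `S₃` has order `2`,
generated by the transposition swapping the indices `i, j` and fixing `k`. -/
theorem stmt6 (m : ℕ) (hm : 3 ≤ m) (hmodd : Odd m) (i j k : Fin 3)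
    (hij : i ≠ j) (hik : i ≠ k) (hjk : j ≠ k)
    (G : Subgroup (Mgrp m))
    (hpi : G.map (SemidirectProduct.rightHom : Mgrp m →* Equiv.Perm (Fin 3)) =
      Subgroup.zpowers (Equiv.swap i j))
    (e a c : ℕ)
    (hE : e = Nat.card ↥(NG G))
    (hA : a = Nat.card ↥(NG G ⊓ HsubM m i))
    (hC : c = Nat.card ↥(NG G ⊓ HsubM m k)) :
    Nat.card ↥(NG G ⊓ HsubM m j) = a ∧
    c ∣ m ∧ a ∣ c ∧ a * c ∣ e ∧ e / a ∣ m ∧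
    Nat.gcd (e / (a * c)) (c / a) = 1 ∧
    Nat.card {x : Mgrp m // x ∈ G ∧ x ∉ NG G ∧ orderOf x = 2} = e / c := by
  have hker := aux_ker m i j k hij hik hjk
  have hF : ∀ p q p' q', auxF m i j p q * auxF m i j p' q' = auxF m i j (p + p') (q + q') := by
    intro p q p' q'
    unfold auxF
    rw [← map_mul, ← QuotientGroup.mk_mul]
    congr 2
    funext t
    change Multiplicative.ofAdd _ = Multiplicative.ofAdd _
    congr 1
    change (if t = i then p else if t = j then q else 0) +
      (if t = i then p' else if t = j then q' else 0) = _
    split_ifs <;> simp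
  refine aux_main hm hmodd (SemidirectProduct.rightHom : Mgrp m →* Equiv.Perm (Fin 3))
    (Equiv.swap i j) (Equiv.swap_mul_self i j) (by simpa using hij) (auxF m i j) hF ?_ hker
    (fun g p q => aux_conj m i j hij g p q) G (NG G) (HsubM m i) (HsubM m j) (HsubM m k)
    ?_ ?_ (fun _ => Iff.rfl) ?_ ?_ ?_ e a c hE hA hC
  · intro p q p' q' h
    have h := (aux_mk_eq m _ _).1 (SemidirectProduct.inl_injective h)
    obtain ⟨d, hd⟩ := h
    have hd' : ∀ t, (if t = i then p' else if t = j then q' else 0) =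
      (if t = i then p else if t = j then q else 0) + d.toAdd := hd
    have h0 := hd' k
    have h1 := hd' i
    have h2 := hd' j
    generalize d.toAdd = d' at h0 h1 h2
    simp [hik.symm, hjk.symm] at h0
    subst h0
    simp at h1
    simp [hij.symm] at h2
    exact ⟨h1.symm, h2.symm⟩
  · intro x hx
    have : (SemidirectProduct.rightHom : Mgrp m →* Equiv.Perm (Fin 3)) x ∈
        Subgroup.zpowers (Equiv.swap i j) := hpi ▸ Subgroup.mem_map_of_mem _ hx
    obtain ⟨n, hn⟩ := this
    change Equiv.swap i j ^ n = _ at hn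
    rw [← hn]
    have h2 : Equiv.swap i j ^ (2 : ℤ) = 1 := by
      rw [zpow_two, Equiv.swap_mul_self]
    rcases Int.even_or_odd' n with ⟨l, rfl | rfl⟩
    · left; rw [zpow_mul, h2, one_zpow]
    · right; rw [zpow_add, zpow_mul, h2, one_zpow, one_mul, zpow_one]
  · have : Equiv.swap i j ∈ G.map (SemidirectProduct.rightHom : Mgrp m →* Equiv.Perm (Fin 3)) :=
      hpi ▸ Subgroup.mem_zpowers _
    exact this
  · intro x
    constructor
    · intro hx
      obtain ⟨p, q, rfl⟩ := (hker x).1 (by obtain ⟨w, -, rfl⟩ := hx; rfl)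
      rw [aux_mem_HM m j k i i j hjk hij.symm hik.symm] at hx
      simp [hij.symm, hik.symm, hjk.symm] at hx
      exact ⟨p, by rw [hx]⟩
    · rintro ⟨p, rfl⟩
      rw [aux_mem_HM m j k i i j hjk hij.symm hik.symm]
      simp [hij.symm, hik.symm]
  · intro x
    constructor
    · intro hx
      obtain ⟨p, q, rfl⟩ := (hker x).1 (by obtain ⟨w, -, rfl⟩ := hx; rfl)
      rw [aux_mem_HM m i k j i j hik hij hjk.symm] at hx
      simp [hik.symm, hjk.symm] at hx
      exact ⟨q, by rw [hx]⟩
    · rintro ⟨p, rfl⟩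
      rw [aux_mem_HM m i k j i j hik hij hjk.symm]
      simp [hik.symm, hjk.symm]
  · intro x
    constructor
    · intro hx
      obtain ⟨p, q, rfl⟩ := (hker x).1 (by obtain ⟨w, -, rfl⟩ := hx; rfl)
      rw [aux_mem_HM m i j k i j hij hik hjk] at hx
      simp [hij.symm] at hx
      exact ⟨p, by rw [hx]⟩
    · rintro ⟨p, rfl⟩
      rw [aux_mem_HM m i j k i j hij hik hjk]
      simp
end

section
/- Every element of M whose image under π is a 3-cycle of S₃ has order 3. -/
lemma three_cycle_fin3 (σ : Equiv.Perm (Fin 3)) (h : σ ^ 3 = 1) (h1 : σ ≠ 1) (i : Fin 3) :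
    (i = 0 ∧ σ.symm i = 1 ∧ σ.symm (σ.symm i) = 2) ∨
    (i = 0 ∧ σ.symm i = 2 ∧ σ.symm (σ.symm i) = 1) ∨
    (i = 1 ∧ σ.symm i = 0 ∧ σ.symm (σ.symm i) = 2) ∨
    (i = 1 ∧ σ.symm i = 2 ∧ σ.symm (σ.symm i) = 0) ∨
    (i = 2 ∧ σ.symm i = 0 ∧ σ.symm (σ.symm i) = 1) ∨
    (i = 2 ∧ σ.symm i = 1 ∧ σ.symm (σ.symm i) = 0) := by
  revert σ i
  decide

/-- From the proofs of Propositions 3.5 and 3.6 of Dalla Volta–Montanucci–Zini: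
every element of `M = W ⋊ S₃` projecting to a 3-cycle of `S₃` has order 3. -/
theorem stmt7 (m : ℕ) (hm : 2 ≤ m) (x : Mgrp m)
    (hx : (SemidirectProduct.rightHom x : Equiv.Perm (Fin 3)).IsThreeCycle) :
    orderOf x = 3 := by
  obtain ⟨w, σ⟩ := x
  have ho : orderOf σ = 3 := hx.orderOf
  have h3 : σ ^ 3 = 1 := orderOf_dvd_iff_pow_eq_one.mp (dvd_of_eq ho)
  have h1 : σ ≠ 1 := by rintro rfl; simp at ho
  have : Fact (Nat.Prime 3) := ⟨Nat.prime_three⟩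
  refine orderOf_eq_prime ?_ ?_
  · refine SemidirectProduct.ext ?_ ?_
    · induction w using QuotientGroup.induction_on with
      | H v =>
        rw [pow_succ', pow_two]
        change ((v * permV m σ (v * permV m σ v) : Vgrp m) : Wgrp m) = 1
        rw [QuotientGroup.eq_one_iff]
        refine ⟨v 0 * v 1 * v 2, ?_⟩
        funext i
        change v 0 * v 1 * v 2 = v i * (v (σ.symm i) * v (σ.symm (σ.symm i)))
        rcases three_cycle_fin3 σ h3 h1 i with h | h | h | h | h | h <;>
          (obtain ⟨a, b, c⟩ := h; rw [c, b, a]; ac_rfl)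
    · rw [pow_succ', pow_two]
      change σ * (σ * σ) = 1
      rw [← h3, pow_succ', pow_two]
  · intro h
    exact h1 (congrArg SemidirectProduct.right h)
end
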